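/- There is an absolute constant C > 0 such that for all real x ≥ 2, the number of ordered triples of primes (p, q, r) with lcm(p−1, q−1, r−1) ≤ x is at most C·x·(log x)^3. Equivalently, S_3(x) := (1/x)·Σ_{lcm(p−1,q−1,r−1) ≤ x} 1 ≤ C·(log x)^3, where the sum is over ordered triples of primes (p, q, r). -/

import Mathlib

/-!
Write `a 0`, `a 1`, `a 2` for the three shifted primes. Sorting the prime powers dividing their
least common multiple by the exact set `S` of indices `i` such that they divide `a i` writes the
least common multiple as a product of seven factors `x S`, one for each nonempty `S ⊆ {0, 1, 2}`,
and `a i` is the product of the four `x S` with `i ∈ S`.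

Split each `x S` dyadically, `2 ^ j S ≤ x S < 2 ^ (j S + 1)`, and let `m` be the least over `i` of
the largest `j S` with `i ∈ S`. Some set of factors of size at least `2 ^ m` meets each of the three
products, with at most four occurrences in total. Fixing the other factors and sieving in these by
Selberg's method shows that at most a constant multiple of `2 ^ (∑ j S) / (m + 1) ^ 3` tuples of the
box give three distinct shifted primes; the moduli at which the sieve conditions degenerate, because
two of the products agree or one of them vanishes, are harmless on average over the box.

Finally sum over the `j` with `∑ j S ≤ n = log₂ x`. The saving `(m + 1) ^ 3` pays for the three
exponents bounded by the peak `m`, and the geometric series in an exponent away from these pays for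
another one. This leaves three free exponents, hence `x * log x ^ 3`. Triples with a repeated prime
are few, because only `O(x * log x ^ 2)` pairs have least common multiple at most `x`.
-/

open Filter Real

section SelbergSieve

variable {T κ : Type*}

theorem abs_sum_prod_add_mul_indicator_sub_le (X : Finset T) (b : κ → T → Prop)
    [∀ p x, Decidable (b p x)] (δ α β : κ → ℝ) {R : ℝ} {Q : Finset κ}
    (hR : ∀ r ⊆ Q, |((X.filter fun x ↦ ∀ p ∈ r, b p x).card : ℝ) - X.card * ∏ p ∈ r, δ p| ≤ R) :
    |∑ x ∈ X, ∏ p ∈ Q, (α p + β p * if b p x then 1 else 0) - X.card * ∏ p ∈ Q, (α p + β p * δ p)|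
      ≤ R * ∏ p ∈ Q, (|α p| + |β p|) := by
  classical
  have expand (u v w : κ → ℝ) : ∏ p ∈ Q, (u p + v p * w p) =
      ∑ r ∈ Q.powerset, (∏ p ∈ r, v p) * (∏ p ∈ Q \ r, u p) * ∏ p ∈ r, w p := by
    simp_rw [add_comm (u _), Finset.prod_add, Finset.prod_mul_distrib, mul_right_comm]
  have moment : ∑ x ∈ X, ∏ p ∈ Q, (α p + β p * if b p x then 1 else 0) =
      ∑ r ∈ Q.powerset, (∏ p ∈ r, β p) * (∏ p ∈ Q \ r, α p) *
        (X.filter fun x ↦ ∀ p ∈ r, b p x).card := by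
    simp_rw [expand α β fun p ↦ if b p _ then 1 else 0]
    rw [Finset.sum_comm]
    refine Finset.sum_congr rfl fun r _ ↦ ?_
    simp_rw [← Finset.mul_sum, Finset.prod_ite_zero, Finset.prod_const_one, Finset.sum_boole]
  have majorant : ∏ p ∈ Q, (|α p| + |β p|) =
      ∑ r ∈ Q.powerset, |(∏ p ∈ r, β p) * ∏ p ∈ Q \ r, α p| := by
    simpa [abs_mul, Finset.abs_prod] using expand (|α ·|) (|β ·|) 1
  rw [moment, expand α β δ, majorant, Finset.mul_sum, Finset.mul_sum, ← Finset.sum_sub_distrib]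
  refine (Finset.abs_sum_le_sum_abs _ _).trans (Finset.sum_le_sum fun r hr ↦ ?_)
  rw [mul_left_comm, ← mul_sub, abs_mul, mul_comm]
  exact mul_le_mul_of_nonneg_right (hR r (Finset.mem_powerset.1 hr)) (abs_nonneg _)

variable [DecidableEq κ]

theorem prod_mul_prod_eq_prod_union_ite {M : Type*} [CommMonoid M] (s t : Finset κ) (f : κ → M) :
    (∏ p ∈ s, f p) * ∏ p ∈ t, f p =
      ∏ p ∈ s ∪ t, if p ∈ s ∩ t then f p ^ 2 else f p := by
  have h (p : κ) : (if p ∈ s ∩ t then f p ^ 2 else f p) =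
      f p * if p ∈ s ∩ t then f p else 1 := by
    split_ifs <;> simp [sq]
  simp_rw [h, Finset.prod_mul_distrib, Finset.prod_ite_mem]
  rw [Finset.inter_eq_right.2 (Finset.inter_subset_left.trans Finset.subset_union_left),
    Finset.prod_union_inter]

/-- The local factor at `p` of the sieve weights: `-1` on the event `b p` and `δ p / (1 - δ p)` off
it, so that it has mean zero when `b p` has density `δ p`. -/
noncomputable def sieveFactor (b : κ → T → Prop) [∀ p x, Decidable (b p x)] (δ : κ → ℝ) (p : κ)
    (x : T) : ℝ :=
  if b p x then -1 else δ p / (1 - δ p)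

theorem sum_prod_sieveFactor_mul_prod_le (X : Finset T) (b : κ → T → Prop)
    [∀ p x, Decidable (b p x)] {δ : κ → ℝ} {R : ℝ} {s t : Finset κ}
    (hδ0 : ∀ p ∈ s ∪ t, 0 ≤ δ p) (hδ1 : ∀ p ∈ s ∪ t, δ p < 1)
    (hR : ∀ r ⊆ s ∪ t,
      |((X.filter fun x ↦ ∀ p ∈ r, b p x).card : ℝ) - X.card * ∏ p ∈ r, δ p| ≤ R) :
    ∑ x ∈ X, (∏ p ∈ s, sieveFactor b δ p x) * ∏ p ∈ t, sieveFactor b δ p x ≤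
      (if s = t then X.card * ∏ p ∈ s, δ p / (1 - δ p) else 0) +
        R * ∏ p ∈ s ∪ t, 2 / (1 - δ p) ^ 2 := by
  set g : κ → ℝ := fun p ↦ δ p / (1 - δ p) with hg
  set α : κ → ℝ := fun p ↦ if p ∈ s ∩ t then g p ^ 2 else g p with hα
  set β : κ → ℝ := fun p ↦ if p ∈ s ∩ t then 1 - g p ^ 2 else -(1 + g p) with hβ
  have affine (x : T) : (∏ p ∈ s, sieveFactor b δ p x) * ∏ p ∈ t, sieveFactor b δ p x =
      ∏ p ∈ s ∪ t, (α p + β p * if b p x then 1 else 0) := by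
    rw [prod_mul_prod_eq_prod_union_ite]
    refine Finset.prod_congr rfl fun p _ ↦ ?_
    simp only [sieveFactor, hα, hβ]
    split_ifs <;> ring
  have mean (p : κ) (hp : p ∈ s ∪ t) : α p + β p * δ p = if p ∈ s ∩ t then g p else 0 := by
    have : 1 - δ p ≠ 0 := by linarith [hδ1 p hp]
    simp only [hα, hβ, hg]
    split_ifs <;> field
  have main : ∏ p ∈ s ∪ t, (α p + β p * δ p) = if s = t then ∏ p ∈ s, g p else 0 := by
    rw [Finset.prod_congr rfl mean, Finset.prod_ite_zero]
    by_cases hst : s = t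
    · simp [hst]
    · rw [if_neg hst, if_neg fun h ↦ hst ?_]
      exact sup_le_inf.1 h
  have size (p : κ) (hp : p ∈ s ∪ t) : |α p| + |β p| ≤ 2 / (1 - δ p) ^ 2 := by
    have hpos : 0 < 1 - δ p := by linarith [hδ1 p hp]
    have hg0 : 0 ≤ g p := div_nonneg (hδ0 p hp) hpos.le
    have : 2 / (1 - δ p) ^ 2 = 2 * (1 + g p) ^ 2 := by simp only [hg]; field
    rw [this]
    simp only [hα, hβ]
    split_ifs
    · rw [abs_of_nonneg (by positivity)]
      have : |1 - g p ^ 2| ≤ 1 + g p ^ 2 := abs_le.2 ⟨by linarith, by linarith [sq_nonneg (g p)]⟩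
      nlinarith
    · rw [abs_of_nonneg hg0, abs_neg, abs_of_nonneg (by positivity)]
      nlinarith
  have hR0 : 0 ≤ R := (abs_nonneg _).trans (hR ∅ (Finset.empty_subset _))
  have error := (abs_le.1 (abs_sum_prod_add_mul_indicator_sub_le X b δ α β hR)).2
  rw [main, mul_ite, mul_zero] at error
  simp_rw [affine]
  linarith [mul_le_mul_of_nonneg_left
    (Finset.prod_le_prod (fun p _ ↦ add_nonneg (abs_nonneg (α p)) (abs_nonneg (β p))) size) hR0]

theorem sq_mul_card_sifted_le (X : Finset T) (b : κ → T → Prop)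
    [∀ p x, Decidable (b p x)] {P : Finset κ} {D : Finset (Finset κ)} {δ : κ → ℝ} {R B : ℝ}
    (hD : ∀ s ∈ D, s ⊆ P) (hδ0 : ∀ p ∈ P, 0 ≤ δ p) (hδ1 : ∀ p ∈ P, δ p < 1) (hR0 : 0 ≤ R)
    (hR : ∀ s ∈ D, ∀ t ∈ D, ∀ r ⊆ s ∪ t,
      |((X.filter fun x ↦ ∀ p ∈ r, b p x).card : ℝ) - X.card * ∏ p ∈ r, δ p| ≤ R)
    (hB : ∀ s ∈ D, ∀ t ∈ D, ∏ p ∈ s ∪ t, 2 / (1 - δ p) ^ 2 ≤ B) :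
    (∑ s ∈ D, ∏ p ∈ s, δ p / (1 - δ p)) ^ 2 * (X.filter fun x ↦ ∀ p ∈ P, ¬ b p x).card ≤
      X.card * (∑ s ∈ D, ∏ p ∈ s, δ p / (1 - δ p)) + (D.card : ℝ) ^ 2 * (R * B) := by
  set G := ∑ s ∈ D, ∏ p ∈ s, δ p / (1 - δ p)
  set W : T → ℝ := fun x ↦ ∑ s ∈ D, ∏ p ∈ s, sieveFactor b δ p x with hW
  have sifted (x : T) (hx : x ∈ X.filter fun x ↦ ∀ p ∈ P, ¬ b p x) : W x ^ 2 = G ^ 2 := by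
    have hx := (Finset.mem_filter.1 hx).2
    exact congrArg (· ^ 2) <| Finset.sum_congr rfl fun s hs ↦ Finset.prod_congr rfl fun p hp ↦
      if_neg (hx p (hD s hs hp))
  have correlation (s : Finset κ) (hs : s ∈ D) (t : Finset κ) (ht : t ∈ D) :
      ∑ x ∈ X, (∏ p ∈ s, sieveFactor b δ p x) * ∏ p ∈ t, sieveFactor b δ p x ≤
        (if s = t then X.card * ∏ p ∈ s, δ p / (1 - δ p) else 0) + R * B := by
    have hP := Finset.union_subset (hD s hs) (hD t ht)
    exact (sum_prod_sieveFactor_mul_prod_le X b (fun p hp ↦ hδ0 p (hP hp))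
      (fun p hp ↦ hδ1 p (hP hp)) (hR s hs t ht)).trans
      (add_le_add_right (mul_le_mul_of_nonneg_left (hB s hs t ht) hR0) _)
  calc G ^ 2 * (X.filter fun x ↦ ∀ p ∈ P, ¬ b p x).card
      = ∑ x ∈ X.filter fun x ↦ ∀ p ∈ P, ¬ b p x, W x ^ 2 := by
        rw [Finset.sum_congr rfl sifted, Finset.sum_const, nsmul_eq_mul, mul_comm]
    _ ≤ ∑ x ∈ X, W x ^ 2 :=
        Finset.sum_le_sum_of_subset_of_nonneg (Finset.filter_subset _ _) fun _ _ _ ↦ sq_nonneg _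
    _ = ∑ s ∈ D, ∑ t ∈ D,
          ∑ x ∈ X, (∏ p ∈ s, sieveFactor b δ p x) * ∏ p ∈ t, sieveFactor b δ p x := by
        simp_rw [hW, sq, Finset.sum_mul_sum]
        rw [Finset.sum_comm]
        exact Finset.sum_congr rfl fun s _ ↦ Finset.sum_comm
    _ ≤ ∑ s ∈ D, ∑ t ∈ D,
          ((if s = t then X.card * ∏ p ∈ s, δ p / (1 - δ p) else 0) + R * B) :=
        Finset.sum_le_sum fun s hs ↦ Finset.sum_le_sum fun t ht ↦ correlation s hs t ht
    _ = X.card * G + (D.card : ℝ) ^ 2 * (R * B) := by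
        simp_rw [Finset.sum_add_distrib, Finset.sum_ite_eq, Finset.sum_ite_mem, Finset.inter_self,
          ← Finset.mul_sum, Finset.sum_const, nsmul_eq_mul]
        ring

end SelbergSieve

theorem sum_le_sum_of_injOn {ι κ : Type*} {s : Finset ι} {t : Finset κ} {f : ι → ℝ} {g : κ → ℝ}
    (e : ι → κ) (he : ∀ i ∈ s, e i ∈ t) (hinj : Set.InjOn e s) (hfg : ∀ i ∈ s, f i ≤ g (e i))
    (hg : ∀ k ∈ t, 0 ≤ g k) : ∑ i ∈ s, f i ≤ ∑ k ∈ t, g k := by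
  classical
  refine (Finset.sum_le_sum hfg).trans ?_
  rw [← Finset.sum_image (f := g) hinj]
  exact Finset.sum_le_sum_of_subset_of_nonneg (Finset.image_subset_iff.2 he) fun k hk _ ↦ hg k hk

theorem sum_one_div_sq_le_two (s : Finset ℕ) : ∑ n ∈ s, 1 / (n : ℝ) ^ 2 ≤ 2 := by
  obtain ⟨N, hN⟩ := s.exists_nat_subset_range
  calc ∑ n ∈ s, 1 / (n : ℝ) ^ 2
      ≤ ∑ n ∈ Finset.range N, 1 / (n : ℝ) ^ 2 :=
        Finset.sum_le_sum_of_subset_of_nonneg hN fun _ _ _ ↦ by positivity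
    _ = ∑ n ∈ Finset.Ioo 0 N, ((n : ℝ) ^ 2)⁻¹ := by
        refine (Finset.sum_subset_zero_on_sdiff (fun n hn ↦ ?_) (fun n hn ↦ ?_) fun n _ ↦ ?_).symm
        · exact Finset.mem_range.2 (Finset.mem_Ioo.1 hn).2
        · obtain rfl : n = 0 := by simp at hn; omega
          simp
        · exact (one_div _).symm
    _ ≤ 2 := by simpa using sum_Ioo_inv_sq_le (α := ℝ) 0 N

section SieveMass

theorem prod_le_prod_of_subset_primes {P s t : Finset ℕ} (hP : ∀ p ∈ P, p.Prime) (hst : s ⊆ t)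
    (ht : t ⊆ P) : ∏ p ∈ s, p ≤ ∏ p ∈ t, p :=
  Finset.prod_le_prod_of_subset_of_one_le' hst fun p hp _ ↦ (hP p (ht hp)).pos

/-- The sets of elements of `P` with product at most `z`. For a set `P` of primes, these are the
prime factor sets of the squarefree `d ≤ z` composed of primes in `P`, which support the sieve
weights. -/
def sieveSupport (P : Finset ℕ) (z : ℕ) : Finset (Finset ℕ) :=
  P.powerset.filter fun s ↦ ∏ p ∈ s, p ≤ z

theorem mem_sieveSupport {P s : Finset ℕ} {z : ℕ} :
    s ∈ sieveSupport P z ↔ s ⊆ P ∧ ∏ p ∈ s, p ≤ z := by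
  simp only [sieveSupport, Finset.mem_filter, Finset.mem_powerset]

theorem mem_sieveSupport_primesLE {s : Finset ℕ} {z : ℕ} :
    s ∈ sieveSupport z.primesLE z ↔ (∀ p ∈ s, p.Prime) ∧ ∏ p ∈ s, p ≤ z := by
  refine mem_sieveSupport.trans <| and_congr_left fun hz ↦
    ⟨fun h p hp ↦ Nat.prime_of_mem_primesLE (h hp), fun h p hp ↦ Nat.mem_primesLE.2 ⟨?_, h p hp⟩⟩
  exact (Nat.le_of_dvd (Finset.prod_pos fun q hq ↦ (h q hq).pos)
    (Finset.dvd_prod_of_mem _ hp)).trans hz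

/-- The sum of `κ ^ ω(d) / d` over the squarefree `d ≤ z` composed of primes in `P`: the
denominator of the upper bound sieve of dimension `κ`. -/
noncomputable def sieveMass (κ : ℝ) (P : Finset ℕ) (z : ℕ) : ℝ :=
  ∑ s ∈ sieveSupport P z, ∏ p ∈ s, κ / (p : ℝ)

theorem sieveMass_nonneg {κ : ℝ} (hκ : 0 ≤ κ) (P : Finset ℕ) (z : ℕ) : 0 ≤ sieveMass κ P z :=
  Finset.sum_nonneg fun _ _ ↦ Finset.prod_nonneg fun _ _ ↦ by positivity

theorem log_le_two_mul_sieveMass_one (z : ℕ) : Real.log z ≤ 2 * sieveMass 1 z.primesLE z := by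
  have harmonic_bound : Real.log z ≤ ∑ n ∈ Finset.Icc 1 z, 1 / (n : ℝ) := by
    rcases z.eq_zero_or_pos with rfl | hz
    · simp
    · refine (Real.log_le_log (mod_cast hz) (by push_cast; linarith)).trans
        ((log_add_one_le_harmonic z).trans_eq ?_)
      simp [harmonic_eq_sum_Icc]
  have decompose (n : ℕ) :
      ∃ x : Finset ℕ × ℕ, (∀ p ∈ x.1, p.Prime) ∧ (∏ p ∈ x.1, p) * x.2 ^ 2 = n := by
    obtain ⟨a, b, hab, ha⟩ := Nat.sq_mul_squarefree n
    exact ⟨(a.primeFactors, b), fun p ↦ Nat.prime_of_mem_primeFactors,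
      by rw [Nat.prod_primeFactors_of_squarefree ha, mul_comm, hab]⟩
  choose φ hprime hφ using decompose
  calc Real.log z ≤ ∑ n ∈ Finset.Icc 1 z, 1 / (n : ℝ) := harmonic_bound
    _ ≤ ∑ x ∈ sieveSupport z.primesLE z ×ˢ Finset.Icc 1 z,
          (∏ p ∈ x.1, 1 / (p : ℝ)) * (1 / (x.2 : ℝ) ^ 2) := by
        refine sum_le_sum_of_injOn φ (fun n hn ↦ ?_) ?_ (fun n _ ↦ le_of_eq ?_) fun x _ ↦ ?_
        · obtain ⟨hn1, hnz⟩ := Finset.mem_Icc.1 hn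
          have hsq : (φ n).2 ≠ 0 := fun h ↦ by
            have := hφ n
            simp only [h, ne_eq, two_ne_zero, not_false_eq_true, zero_pow, mul_zero] at this
            omega
          refine Finset.mem_product.2 ⟨mem_sieveSupport_primesLE.2 ⟨hprime n, ?_⟩,
            Finset.mem_Icc.2 ⟨Nat.pos_of_ne_zero hsq, ?_⟩⟩
          · exact (Nat.le_of_dvd hn1 ⟨_, (hφ n).symm⟩).trans hnz
          · exact (Nat.le_of_dvd hn1 <| (dvd_pow_self _ two_ne_zero).trans
              (Dvd.intro_left _ (hφ n))).trans hnz
        · exact fun m _ n _ h ↦ by rw [← hφ m, ← hφ n, h]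
        · conv_lhs => rw [← hφ n]
          push_cast
          rw [Finset.prod_div_distrib, Finset.prod_const_one, div_mul_div_comm, one_mul]
        · exact mul_nonneg (Finset.prod_nonneg fun _ _ ↦ by positivity) (by positivity)
    _ = sieveMass 1 z.primesLE z * ∑ n ∈ Finset.Icc 1 z, 1 / (n : ℝ) ^ 2 := by
        rw [Finset.sum_product, sieveMass, Finset.sum_mul_sum]
    _ ≤ sieveMass 1 z.primesLE z * 2 :=
        mul_le_mul_of_nonneg_left (sum_one_div_sq_le_two _) (sieveMass_nonneg zero_le_one _ _)
    _ = 2 * sieveMass 1 z.primesLE z := mul_comm _ _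

theorem prod_one_add_div_sq_le_exp {κ : ℝ} (hκ : 0 ≤ κ) (s : Finset ℕ) :
    ∏ p ∈ s, (1 + κ / (p : ℝ) ^ 2) ≤ Real.exp (2 * κ) := by
  calc ∏ p ∈ s, (1 + κ / (p : ℝ) ^ 2) ≤ ∏ p ∈ s, Real.exp (κ / (p : ℝ) ^ 2) :=
        Finset.prod_le_prod (fun _ _ ↦ by positivity) fun p _ ↦
          (add_comm _ _).trans_le (Real.add_one_le_exp _)
    _ = Real.exp (κ * ∑ p ∈ s, 1 / (p : ℝ) ^ 2) := by
        simp_rw [← Real.exp_sum, Finset.mul_sum, mul_one_div]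
    _ ≤ Real.exp (2 * κ) := by
        rw [mul_comm 2]
        exact Real.exp_le_exp.2 (mul_le_mul_of_nonneg_left (sum_one_div_sq_le_two s) hκ)

theorem sieveMass_add (κ μ : ℝ) (P : Finset ℕ) (z : ℕ) :
    sieveMass (κ + μ) P z = ∑ x ∈ (sieveSupport P z).sigma fun u ↦ u.powerset,
      (∏ p ∈ x.2, κ / (p : ℝ)) * ∏ p ∈ x.1 \ x.2, μ / (p : ℝ) := by
  simp_rw [sieveMass, Finset.sum_sigma, add_div, Finset.prod_add]

/-- A pair `(s, t)` is encoded by its intersection, which ranges over a convergent Euler product,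
its symmetric difference and the part of the latter that comes from `s`. -/
theorem sieveMass_mul_sieveMass_le_sum {κ μ : ℝ} (hκ : 0 ≤ κ) (hμ : 0 ≤ μ) (y z : ℕ) :
    sieveMass κ y.primesLE y * sieveMass μ z.primesLE z ≤
      ∑ x ∈ y.primesLE.powerset ×ˢ
          (sieveSupport (y * z).primesLE (y * z)).sigma fun u ↦ u.powerset,
        (∏ p ∈ x.1, κ * μ / (p : ℝ) ^ 2) *
          ((∏ p ∈ x.2.2, κ / (p : ℝ)) * ∏ p ∈ x.2.1 \ x.2.2, μ / (p : ℝ)) := by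
  have symmDiff_sdiff (s t : Finset ℕ) : symmDiff s t \ (s \ t) = t \ s := by
    grind [Finset.mem_symmDiff]
  rw [sieveMass, sieveMass, Finset.sum_mul_sum, ← Finset.sum_product']
  refine sum_le_sum_of_injOn (fun x ↦ (x.1 ∩ x.2, ⟨symmDiff x.1 x.2, x.1 \ x.2⟩)) ?_ ?_ ?_ ?_
  · rintro ⟨s, t⟩ hst
    obtain ⟨hsy, htz⟩ := Finset.mem_product.1 hst
    obtain ⟨hs, hs_le⟩ := mem_sieveSupport_primesLE.1 hsy
    obtain ⟨ht, ht_le⟩ := mem_sieveSupport_primesLE.1 htz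
    refine Finset.mem_product.2 ⟨Finset.mem_powerset.2 <|
      Finset.inter_subset_left.trans (mem_sieveSupport.1 hsy).1, Finset.mem_sigma.2
      ⟨mem_sieveSupport_primesLE.2 ⟨fun p hp ↦ ?_, ?_⟩,
        Finset.mem_powerset.2 Finset.subset_union_left⟩⟩
    · exact (Finset.mem_symmDiff.1 hp).elim (fun h ↦ hs p h.1) fun h ↦ ht p h.1
    · refine (Finset.prod_union disjoint_sdiff_sdiff).trans_le <|
        Nat.mul_le_mul (le_trans ?_ hs_le) (le_trans ?_ ht_le)
      exacts [prod_le_prod_of_subset_primes hs Finset.sdiff_subset subset_rfl,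
        prod_le_prod_of_subset_primes ht Finset.sdiff_subset subset_rfl]
  · rintro ⟨s, t⟩ _ ⟨s', t'⟩ _ h
    simp only [Prod.mk.injEq, Sigma.mk.injEq, heq_eq_eq] at h
    obtain ⟨hinter, hsymm, hsdiff⟩ := h
    refine Prod.ext ?_ ?_ <;> dsimp only
    · rw [← Finset.sdiff_union_inter s t, hinter, hsdiff, Finset.sdiff_union_inter]
    · rw [← Finset.sdiff_union_inter t s, ← symmDiff_sdiff, Finset.inter_comm, hinter, hsymm,
        hsdiff, symmDiff_sdiff, Finset.inter_comm, Finset.sdiff_union_inter]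
  · rintro ⟨s, t⟩ _
    have hsq : ∏ p ∈ s ∩ t, κ * μ / (p : ℝ) ^ 2 =
        (∏ p ∈ s ∩ t, κ / (p : ℝ)) * ∏ p ∈ s ∩ t, μ / (p : ℝ) := by
      simp_rw [← Finset.prod_mul_distrib, div_mul_div_comm, sq]
    dsimp only
    rw [symmDiff_sdiff, ← Finset.prod_inter_mul_prod_sdiff s t,
      ← Finset.prod_inter_mul_prod_sdiff t s, Finset.inter_comm t s, hsq]
    exact le_of_eq (by ring)
  · exact fun x _ ↦ mul_nonneg (Finset.prod_nonneg fun _ _ ↦ by positivity) <|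
      mul_nonneg (Finset.prod_nonneg fun _ _ ↦ by positivity)
        (Finset.prod_nonneg fun _ _ ↦ by positivity)

theorem sieveMass_mul_sieveMass_le {κ μ : ℝ} (hκ : 0 ≤ κ) (hμ : 0 ≤ μ) (y z : ℕ) :
    sieveMass κ y.primesLE y * sieveMass μ z.primesLE z ≤
      Real.exp (2 * (κ * μ)) * sieveMass (κ + μ) (y * z).primesLE (y * z) := by
  refine (sieveMass_mul_sieveMass_le_sum hκ hμ y z).trans ?_
  simp_rw [Finset.sum_product, ← Finset.mul_sum, ← Finset.sum_mul]
  rw [← Finset.prod_one_add, ← sieveMass_add]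
  exact mul_le_mul_of_nonneg_right (prod_one_add_div_sq_le_exp (mul_nonneg hκ hμ) _)
    (sieveMass_nonneg (add_nonneg hκ hμ) _ _)

theorem log_pow_le_sieveMass (κ y : ℕ) :
    Real.log y ^ κ ≤ 2 ^ κ * Real.exp (κ ^ 2) * sieveMass κ (y ^ κ).primesLE (y ^ κ) := by
  induction κ with
  | zero => simp [sieveMass, sieveSupport, Finset.filter_singleton]
  | succ κ ih =>
    set H := sieveMass (κ + 1 : ℕ) (y ^ (κ + 1)).primesLE (y ^ (κ + 1)) with hH
    have step : sieveMass κ (y ^ κ).primesLE (y ^ κ) * sieveMass 1 y.primesLE y ≤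
        Real.exp (2 * κ) * H := by
      simpa only [hH, pow_succ, Nat.cast_succ, mul_one] using
        sieveMass_mul_sieveMass_le κ.cast_nonneg zero_le_one (y ^ κ) y
    have hH0 : 0 ≤ H := sieveMass_nonneg (Nat.cast_nonneg _) _ _
    calc Real.log y ^ (κ + 1)
        ≤ 2 ^ κ * Real.exp (κ ^ 2) * sieveMass κ (y ^ κ).primesLE (y ^ κ) *
            (2 * sieveMass 1 y.primesLE y) := by
          rw [pow_succ]
          exact mul_le_mul ih (log_le_two_mul_sieveMass_one y) (Real.log_natCast_nonneg y)
            (mul_nonneg (by positivity) (sieveMass_nonneg κ.cast_nonneg _ _))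
      _ = 2 ^ (κ + 1) * Real.exp (κ ^ 2) *
            (sieveMass κ (y ^ κ).primesLE (y ^ κ) * sieveMass 1 y.primesLE y) := by ring
      _ ≤ 2 ^ (κ + 1) * Real.exp (κ ^ 2) * (Real.exp (2 * κ) * H) := by gcongr
      _ = 2 ^ (κ + 1) * Real.exp (κ ^ 2 + 2 * κ) * H := by rw [Real.exp_add]; ring
      _ ≤ 2 ^ (κ + 1) * Real.exp ((κ + 1 : ℕ) ^ 2) * H := by
          gcongr
          push_cast
          linarith [sq_nonneg (κ : ℝ)]

/-- The factor `∏ p ∣ n, (1 + κ / p)` lost when the prime divisors of `n` are excluded from a sieve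
of dimension `κ`. -/
noncomputable def primeFactorWeight (κ : ℝ) (n : ℕ) : ℝ := ∏ p ∈ n.primeFactors, (1 + κ / p)

theorem sieveMass_le_mul_primeFactorWeight {κ : ℝ} (hκ : 0 ≤ κ) {P : Finset ℕ}
    (hP : ∀ p ∈ P, p.Prime) {E : ℕ} (hE : E ≠ 0) (z : ℕ) :
    sieveMass κ P z ≤ sieveMass κ (P.filter fun p ↦ ¬ p ∣ E) z * primeFactorWeight κ E := by
  set Q := P.filter fun p ↦ ¬ p ∣ E with hQ
  rw [primeFactorWeight, Finset.prod_one_add, sieveMass, sieveMass, Finset.sum_mul_sum,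
    ← Finset.sum_product']
  refine sum_le_sum_of_injOn (fun s ↦ (s ∩ Q, s \ Q)) (fun s hs ↦ ?_) (fun s _ t _ h ↦ ?_)
    (fun s _ ↦ ?_) fun x _ ↦ ?_
  · obtain ⟨hsP, hsz⟩ := mem_sieveSupport.1 hs
    refine Finset.mem_product.2 ⟨mem_sieveSupport.2 ⟨Finset.inter_subset_right, ?_⟩,
      Finset.mem_powerset.2 fun p hp ↦ ?_⟩
    · exact (prod_le_prod_of_subset_primes hP Finset.inter_subset_left hsP).trans hsz
    · obtain ⟨hps, hpQ⟩ := Finset.mem_sdiff.1 hp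
      simp only [hQ, Finset.mem_filter, hsP hps, true_and, not_not] at hpQ
      exact Nat.mem_primeFactors.2 ⟨hP p (hsP hps), hpQ, hE⟩
  · obtain ⟨hinter, hsdiff⟩ := Prod.mk.inj h
    rw [← Finset.sdiff_union_inter s Q, hinter, hsdiff, Finset.sdiff_union_inter]
  · exact (Finset.prod_inter_mul_prod_sdiff s Q _).ge
  · exact mul_nonneg (Finset.prod_nonneg fun _ _ ↦ by positivity)
      (Finset.prod_nonneg fun _ _ ↦ by positivity)

end SieveMass

section Equidistribution

theorem one_add_mul_pow_le {κ t : ℝ} (hκ : 0 ≤ κ) (ht0 : 0 ≤ t) (ht1 : t ≤ 1) (n : ℕ) :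
    (1 + κ * t) ^ n ≤ 1 + ((1 + κ) ^ n - 1) * t := by
  induction n with
  | zero => simp
  | succ n ih =>
    have hpow : 0 ≤ (1 + κ) ^ n - 1 := sub_nonneg.2 (one_le_pow₀ (by linarith))
    calc (1 + κ * t) ^ (n + 1)
        ≤ (1 + ((1 + κ) ^ n - 1) * t) * (1 + κ * t) := by rw [pow_succ]; gcongr
      _ = 1 + ((1 + κ) ^ n - 1) * t + κ * t + κ * ((1 + κ) ^ n - 1) * t * t := by ring
      _ ≤ 1 + ((1 + κ) ^ n - 1) * t + κ * t + κ * ((1 + κ) ^ n - 1) * t * 1 := by gcongr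
      _ = 1 + ((1 + κ) ^ (n + 1) - 1) * t := by ring

theorem abs_prod_sub_prod_le {ι : Type*} (s : Finset ι) {a b : ι → ℝ} {t : ℝ} (ht : 0 ≤ t)
    (hb : ∀ i ∈ s, 0 ≤ b i) (hab : ∀ i ∈ s, |a i - b i| ≤ t * b i) :
    |∏ i ∈ s, a i - ∏ i ∈ s, b i| ≤ ((1 + t) ^ s.card - 1) * ∏ i ∈ s, b i := by
  classical
  induction s using Finset.induction_on with
  | empty => simp
  | insert i s hi ih =>
    rw [Finset.forall_mem_insert] at hb hab
    have hB : 0 ≤ ∏ i ∈ s, b i := Finset.prod_nonneg hb.2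
    have hbi := hb.1
    rw [Finset.prod_insert hi, Finset.prod_insert hi, Finset.card_insert_of_notMem hi]
    set A := ∏ i ∈ s, a i
    set B := ∏ i ∈ s, b i
    have ha : |a i| ≤ (1 + t) * b i := by
      calc |a i| = |(a i - b i) + b i| := by rw [sub_add_cancel]
        _ ≤ |a i - b i| + |b i| := abs_add_le _ _
        _ ≤ (1 + t) * b i := by rw [abs_of_nonneg hbi]; linarith [hab.1]
    calc |a i * A - b i * B| = |a i * (A - B) + (a i - b i) * B| := by ring_nf
      _ ≤ |a i| * |A - B| + |a i - b i| * B := by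
          rw [← abs_of_nonneg hB, ← abs_mul, ← abs_mul, abs_of_nonneg hB]
          exact abs_add_le _ _
      _ ≤ (1 + t) * b i * (((1 + t) ^ s.card - 1) * B) + t * b i * B := by
          gcongr
          exacts [ih hb.2 hab.2, hab.1]
      _ = ((1 + t) ^ (s.card + 1) - 1) * (b i * B) := by ring

theorem abs_card_filter_natCast_eq_sub_le (N : ℕ) {r : ℕ} (hr : 0 < r) (c : ZMod r) :
    |(((Finset.Ico N (2 * N)).filter fun n : ℕ ↦ (n : ZMod r) = c).card : ℝ) - N / r| ≤ 1 := by
  have : NeZero r := ⟨hr.ne'⟩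
  have count := Nat.Ico_filter_modEq_card N (2 * N) hr c.val
  simp_rw [← ZMod.natCast_eq_natCast_iff, ZMod.natCast_zmod_val] at count
  set u : ℚ := (N - c.val) / r
  have shift : ((2 * N : ℕ) - (c.val : ℚ)) / r = u + N / r := by
    simp only [u]; push_cast; ring
  have hN : (0 : ℚ) ≤ N / r := by positivity
  rw [shift, max_eq_left (sub_nonneg.2 (Int.ceil_mono (by linarith)))] at count
  have bound : |(((Finset.Ico N (2 * N)).filter fun n : ℕ ↦ (n : ZMod r) = c).card : ℚ) - N / r|
      ≤ 1 := by
    rw [← Int.cast_natCast, count, Int.cast_sub, abs_le]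
    constructor <;> linarith [Int.le_ceil (u + N / r), Int.ceil_lt_add_one (u + N / r),
      Int.le_ceil u, Int.ceil_lt_add_one u]
  have bound_real := (Rat.cast_le (K := ℝ)).2 bound
  push_cast at bound_real
  exact bound_real

variable {ι : Type*}

/-- The number of roots modulo `r` of the integer polynomial `F`. -/
noncomputable def rootCount (F : MvPolynomial ι ℤ) (r : ℕ) : ℕ :=
  Nat.card {c : ι → ZMod r // MvPolynomial.aeval c F = 0}

theorem rootCount_one (F : MvPolynomial ι ℤ) : rootCount F 1 = 1 :=
  Nat.card_eq_one_iff_unique.2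
    ⟨⟨fun _ _ ↦ Subtype.ext (Subsingleton.elim _ _)⟩, ⟨⟨0, Subsingleton.elim _ _⟩⟩⟩

theorem aeval_ringHom_comp {R S : Type*} [CommRing R] [CommRing S] (F : MvPolynomial ι ℤ)
    (c : ι → R) (f : R →+* S) :
    MvPolynomial.aeval (f ∘ c) F = f (MvPolynomial.aeval c F) :=
  (MvPolynomial.comp_aeval_apply c f.toIntAlgHom F).symm

theorem rootCount_mul (F : MvPolynomial ι ℤ) {m n : ℕ} (h : m.Coprime n) :
    rootCount F (m * n) = rootCount F m * rootCount F n := by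
  let e : (ι → ZMod (m * n)) ≃ (ι → ZMod m) × (ι → ZMod n) :=
    ((Equiv.refl ι).arrowCongr (ZMod.chineseRemainder h).toEquiv).trans
      (Equiv.arrowProdEquivProdArrow ι (fun _ ↦ ZMod m) fun _ ↦ ZMod n)
  have aeval_e (c : ι → ZMod (m * n)) : MvPolynomial.aeval c F = 0 ↔
      MvPolynomial.aeval (e c).1 F = 0 ∧ MvPolynomial.aeval (e c).2 F = 0 := by
    let f := (ZMod.chineseRemainder h).toRingHom
    have fst : MvPolynomial.aeval (e c).1 F = (f (MvPolynomial.aeval c F)).1 :=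
      aeval_ringHom_comp F c ((RingHom.fst _ _).comp f)
    have snd : MvPolynomial.aeval (e c).2 F = (f (MvPolynomial.aeval c F)).2 :=
      aeval_ringHom_comp F c ((RingHom.snd _ _).comp f)
    rw [fst, snd, ← map_eq_zero_iff f (ZMod.chineseRemainder h).injective, Prod.ext_iff]
    rfl
  rw [rootCount, rootCount, rootCount, ← Nat.card_prod]
  exact Nat.card_congr ((e.subtypeEquiv aeval_e).trans Equiv.subtypeProdEquivProd)

theorem rootCount_prod (F : MvPolynomial ι ℤ) {s : Finset ℕ} (hs : ∀ p ∈ s, p.Prime) :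
    rootCount F (∏ p ∈ s, p) = ∏ p ∈ s, rootCount F p := by
  induction s using Finset.induction_on with
  | empty => exact rootCount_one F
  | insert p s hp ih =>
    rw [Finset.forall_mem_insert] at hs
    rw [Finset.prod_insert hp, Finset.prod_insert hp, rootCount_mul, ih hs.2]
    exact Nat.Coprime.prod_right fun q hq ↦
      (Nat.coprime_primes hs.1 (hs.2 q hq)).2 fun hpq ↦ hp (hpq ▸ hq)

theorem natCast_dvd_eval_iff (F : MvPolynomial ι ℤ) (x : ι → ℕ) (r : ℕ) :
    (r : ℤ) ∣ MvPolynomial.eval (fun i ↦ (x i : ℤ)) F ↔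
      MvPolynomial.aeval (fun i ↦ (x i : ZMod r)) F = 0 := by
  have reduce := aeval_ringHom_comp F (fun i ↦ (x i : ℤ)) (Int.castRingHom (ZMod r))
  simp only [Function.comp_def, eq_intCast, Int.cast_natCast, MvPolynomial.aeval_eq_eval] at reduce
  rw [reduce, ZMod.intCast_zmod_eq_zero_iff_dvd]

variable [Fintype ι]

/-- The proportion of residue vectors modulo `r` that are roots of `F`. -/
noncomputable def rootDensity (F : MvPolynomial ι ℤ) (r : ℕ) : ℝ :=
  rootCount F r / (r : ℝ) ^ Fintype.card ι

theorem rootDensity_nonneg (F : MvPolynomial ι ℤ) (r : ℕ) : 0 ≤ rootDensity F r := by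
  unfold rootDensity
  positivity

theorem rootDensity_prod (F : MvPolynomial ι ℤ) {s : Finset ℕ} (hs : ∀ p ∈ s, p.Prime) :
    rootDensity F (∏ p ∈ s, p) = ∏ p ∈ s, rootDensity F p := by
  simp only [rootDensity, rootCount_prod F hs, Nat.cast_prod, Finset.prod_div_distrib,
    Finset.prod_pow]

theorem abs_prod_card_filter_natCast_eq_sub_le {N : ι → ℕ} {M r : ℕ} (hr : 0 < r) (hrM : r ≤ M)
    (hN : ∀ i, M ≤ N i) (c : ι → ZMod r) :
    |∏ i, (((Finset.Ico (N i) (2 * N i)).filter fun n : ℕ ↦ (n : ZMod r) = c i).card : ℝ) -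
        ∏ i, (N i : ℝ) / r| ≤
      2 ^ Fintype.card ι * (r / M) * ∏ i, (N i : ℝ) / r := by
  have hr0 : (0 : ℝ) < r := mod_cast hr
  have hM0 : (0 : ℝ) < M := mod_cast hr.trans_le hrM
  have hrM' : (r : ℝ) / M ≤ 1 := (div_le_one hM0).2 (mod_cast hrM)
  refine (abs_prod_sub_prod_le Finset.univ (t := r / M) (by positivity)
    (fun i _ ↦ by positivity) fun i _ ↦ ?_).trans ?_
  · refine (abs_card_filter_natCast_eq_sub_le (N i) hr (c i)).trans ?_
    rw [div_mul_div_comm, mul_comm, mul_div_mul_right _ _ hr0.ne', one_le_div hM0]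
    exact mod_cast hN i
  · have := one_add_mul_pow_le zero_le_one (t := r / M) (by positivity) hrM' (Fintype.card ι)
    rw [one_mul, one_add_one_eq_two] at this
    gcongr
    rw [Finset.card_univ]
    linarith [show 0 ≤ (r : ℝ) / M by positivity]

variable [DecidableEq ι]

/-- The box of all `x` with `N i ≤ x i < 2 * N i` for every `i`. -/
def dyadicBox (N : ι → ℕ) : Finset (ι → ℕ) :=
  Fintype.piFinset fun i ↦ Finset.Ico (N i) (2 * N i)

theorem mem_dyadicBox {N x : ι → ℕ} :
    x ∈ dyadicBox N ↔ ∀ i, N i ≤ x i ∧ x i < 2 * N i := by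
  simp only [dyadicBox, Fintype.mem_piFinset, Finset.mem_Ico]

theorem card_dyadicBox (N : ι → ℕ) : (dyadicBox N).card = ∏ i, N i := by
  simp only [dyadicBox, Fintype.card_piFinset, Nat.card_Ico, two_mul, Nat.add_sub_cancel]

theorem card_filter_dvd_eval_eq_sum_prod (F : MvPolynomial ι ℤ) (N : ι → ℕ) (r : ℕ) [NeZero r] :
    ((dyadicBox N).filter fun x ↦ (r : ℤ) ∣ MvPolynomial.eval (fun i ↦ (x i : ℤ)) F).card =
      ∑ c : ι → ZMod r with MvPolynomial.aeval c F = 0,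
        ∏ i, ((Finset.Ico (N i) (2 * N i)).filter fun n : ℕ ↦ (n : ZMod r) = c i).card := by
  simp_rw [natCast_dvd_eval_iff]
  rw [Finset.card_eq_sum_card_fiberwise (f := fun x i ↦ (x i : ZMod r))
    (t := Finset.univ.filter fun c ↦ MvPolynomial.aeval c F = 0)
    fun x hx ↦ by simpa using (Finset.mem_filter.1 hx).2]
  refine Finset.sum_congr rfl fun c hc ↦ ?_
  rw [← Fintype.card_piFinset, Finset.filter_filter]
  congr 1
  ext x
  simp only [Finset.mem_filter, mem_dyadicBox, Fintype.mem_piFinset, Finset.mem_Ico,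
    forall_and, funext_iff, and_congr_right_iff, and_iff_right_iff_imp]
  intro _ hxc
  rw [funext hxc]
  exact (Finset.mem_filter.1 hc).2

theorem abs_card_filter_dvd_eval_sub_le (F : MvPolynomial ι ℤ) {N : ι → ℕ} {M r : ℕ}
    (hr : 0 < r) (hrM : r ≤ M) (hN : ∀ i, M ≤ N i) :
    |(((dyadicBox N).filter fun x ↦
          (r : ℤ) ∣ MvPolynomial.eval (fun i ↦ (x i : ℤ)) F).card : ℝ) -
        (∏ i, (N i : ℝ)) * rootDensity F r| ≤
      (∏ i, (N i : ℝ)) * (2 ^ Fintype.card ι * (r / M)) := by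
  have : NeZero r := ⟨hr.ne'⟩
  set k := Fintype.card ι
  set Z := Finset.univ.filter fun c : ι → ZMod r ↦ MvPolynomial.aeval c F = 0
  have roots : rootCount F r = Z.card := by
    rw [rootCount, Nat.card_eq_fintype_card, Fintype.card_subtype]
  have main : (∏ i, (N i : ℝ)) * (Z.card / (r : ℝ) ^ k) = ∑ _c ∈ Z, ∏ i, (N i : ℝ) / r := by
    rw [Finset.sum_const, nsmul_eq_mul, Finset.prod_div_distrib, Finset.prod_const,
      Finset.card_univ]
    ring
  have few : (Z.card : ℝ) / r ^ k ≤ 1 := by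
    rw [div_le_one (by positivity)]
    exact_mod_cast (Finset.card_le_univ Z).trans (by simp [k])
  rw [card_filter_dvd_eval_eq_sum_prod, rootDensity, roots, main]
  push_cast
  rw [← Finset.sum_sub_distrib]
  calc _ ≤ ∑ c ∈ Z, 2 ^ k * (r / M) * ∏ i, (N i : ℝ) / r :=
        (Finset.abs_sum_le_sum_abs _ _).trans <| Finset.sum_le_sum fun c _ ↦
          abs_prod_card_filter_natCast_eq_sub_le hr hrM hN c
    _ = (Z.card : ℝ) / r ^ k * ((∏ i, (N i : ℝ)) * (2 ^ k * (r / M))) := by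
        rw [← Finset.mul_sum, ← main]
        ring
    _ ≤ (∏ i, (N i : ℝ)) * (2 ^ k * (r / M)) := mul_le_of_le_one_left (by positivity) few

end Equidistribution

section PolynomialSieve

theorem card_sieveSupport_le {P : Finset ℕ} (hP : ∀ p ∈ P, p.Prime) (z : ℕ) :
    (sieveSupport P z).card ≤ z := by
  have hprime {s : Finset ℕ} (hs : s ∈ sieveSupport P z) : ∀ p ∈ s, p.Prime :=
    fun p hp ↦ hP p ((mem_sieveSupport.1 hs).1 hp)
  calc (sieveSupport P z).card ≤ (Finset.Icc 1 z).card :=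
        Finset.card_le_card_of_injOn (fun s ↦ ∏ p ∈ s, p)
          (fun s hs ↦ Finset.mem_Icc.2 ⟨Finset.prod_pos fun p hp ↦ (hprime hs p hp).pos,
            (mem_sieveSupport.1 hs).2⟩)
          fun s hs t ht hst ↦ by
            rw [← Nat.primeFactors_prod (hprime hs), ← Nat.primeFactors_prod (hprime ht)]
            exact congrArg Nat.primeFactors hst
    _ = z := by simp

theorem prod_union_le_sq {P s t : Finset ℕ} {z : ℕ} (hP : ∀ p ∈ P, p.Prime)
    (hs : s ∈ sieveSupport P z) (ht : t ∈ sieveSupport P z) : ∏ p ∈ s ∪ t, p ≤ z ^ 2 := by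
  obtain ⟨hsP, hsz⟩ := mem_sieveSupport.1 hs
  obtain ⟨-, htz⟩ := mem_sieveSupport.1 ht
  have hinter : 0 < ∏ p ∈ s ∩ t, p :=
    Finset.prod_pos fun p hp ↦ (hP p (hsP (Finset.mem_of_mem_inter_left hp))).pos
  calc ∏ p ∈ s ∪ t, p ≤ (∏ p ∈ s ∪ t, p) * ∏ p ∈ s ∩ t, p := Nat.le_mul_of_pos_right _ hinter
    _ = (∏ p ∈ s, p) * ∏ p ∈ t, p := Finset.prod_union_inter
    _ ≤ z ^ 2 := (Nat.mul_le_mul hsz htz).trans_eq (sq z).symm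

theorem forall_dvd_iff_prod_dvd {s : Finset ℕ} (hs : ∀ p ∈ s, p.Prime) (n : ℤ) :
    (∀ p ∈ s, (p : ℤ) ∣ n) ↔ ((∏ p ∈ s, p : ℕ) : ℤ) ∣ n := by
  simp_rw [Int.natCast_dvd]
  exact ⟨fun h ↦ Finset.prod_primes_dvd _ (fun p hp ↦ (hs p hp).prime) h,
    fun h p hp ↦ (Finset.dvd_prod_of_mem _ hp).trans h⟩

variable {ι : Type*} [Fintype ι]

theorem rootDensity_lt_one {F : MvPolynomial ι ℤ} {p : ℕ}
    (hp : rootCount F p < p ^ Fintype.card ι) : rootDensity F p < 1 :=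
  (div_lt_one (by exact_mod_cast (rootCount F p).zero_le.trans_lt hp)).2 (mod_cast hp)

theorem two_div_one_sub_rootDensity_sq_le {F : MvPolynomial ι ℤ} {p : ℕ} (hp : 2 ≤ p)
    (hlt : rootCount F p < p ^ Fintype.card ι) :
    2 / (1 - rootDensity F p) ^ 2 ≤ (p : ℝ) ^ (2 * Fintype.card ι + 1) := by
  set k := Fintype.card ι
  have hp2 : (2 : ℝ) ≤ p := mod_cast hp
  have gap : 1 / (p : ℝ) ^ k ≤ 1 - rootDensity F p := by
    have : (rootCount F p : ℝ) + 1 ≤ (p : ℝ) ^ k := mod_cast hlt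
    rw [rootDensity, le_sub_iff_add_le, ← add_div, div_le_one (by positivity)]
    linarith
  calc 2 / (1 - rootDensity F p) ^ 2 ≤ 2 / (1 / (p : ℝ) ^ k) ^ 2 := by gcongr
    _ = 2 * (p : ℝ) ^ (2 * k) := by field
    _ ≤ (p : ℝ) ^ (2 * k + 1) := by rw [pow_succ']; gcongr

theorem div_le_rootDensity_div_one_sub {F : MvPolynomial ι ℤ} {κ : ℝ} {p : ℕ} (hp : 0 < p)
    (hlt : rootCount F p < p ^ Fintype.card ι)
    (hκ : κ * p ^ Fintype.card ι ≤ (p + κ) * rootCount F p) :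
    κ / p ≤ rootDensity F p / (1 - rootDensity F p) := by
  have hp0 : (0 : ℝ) < p := mod_cast hp
  have hlt' : (rootCount F p : ℝ) < (p : ℝ) ^ Fintype.card ι := mod_cast hlt
  rw [rootDensity, one_sub_div (by positivity), div_div_div_cancel_right₀ (by positivity),
    div_le_div_iff₀ hp0 (sub_pos.2 hlt')]
  linarith

theorem prod_union_two_div_le {F : MvPolynomial ι ℤ} {P s t : Finset ℕ} {z : ℕ}
    (hP : ∀ p ∈ P, p.Prime) (hlt : ∀ p ∈ P, rootCount F p < p ^ Fintype.card ι)
    (hs : s ∈ sieveSupport P z) (ht : t ∈ sieveSupport P z) :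
    ∏ p ∈ s ∪ t, 2 / (1 - rootDensity F p) ^ 2 ≤ (z : ℝ) ^ (4 * Fintype.card ι + 2) := by
  have hst := Finset.union_subset (mem_sieveSupport.1 hs).1 (mem_sieveSupport.1 ht).1
  calc ∏ p ∈ s ∪ t, 2 / (1 - rootDensity F p) ^ 2
      ≤ ∏ p ∈ s ∪ t, (p : ℝ) ^ (2 * Fintype.card ι + 1) :=
        Finset.prod_le_prod (fun p _ ↦ by positivity) fun p hp ↦
          two_div_one_sub_rootDensity_sq_le (hP p (hst hp)).two_le (hlt p (hst hp))
    _ = (∏ p ∈ s ∪ t, p : ℕ) ^ (2 * Fintype.card ι + 1) := by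
        push_cast; exact Finset.prod_pow _ _ _
    _ ≤ ((z ^ 2 : ℕ) : ℝ) ^ (2 * Fintype.card ι + 1) := by
        gcongr
        exact prod_union_le_sq hP hs ht
    _ = (z : ℝ) ^ (4 * Fintype.card ι + 2) := by push_cast; ring

variable [DecidableEq ι]

theorem abs_card_filter_forall_dvd_eval_sub_le (F : MvPolynomial ι ℤ) {N : ι → ℕ} {M z : ℕ}
    {s : Finset ℕ} (hs : ∀ p ∈ s, p.Prime) (hsz : ∏ p ∈ s, p ≤ z) (hzM : z ≤ M)
    (hN : ∀ i, M ≤ N i) :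
    |(((dyadicBox N).filter fun x ↦
          ∀ p ∈ s, (p : ℤ) ∣ MvPolynomial.eval (fun i ↦ (x i : ℤ)) F).card : ℝ) -
        (∏ i, (N i : ℝ)) * ∏ p ∈ s, rootDensity F p| ≤
      (∏ i, (N i : ℝ)) * (2 ^ Fintype.card ι * (z / M)) := by
  simp_rw [forall_dvd_iff_prod_dvd hs, ← rootDensity_prod F hs]
  refine (abs_card_filter_dvd_eval_sub_le F (Finset.prod_pos fun p hp ↦ (hs p hp).pos)
    (hsz.trans hzM) hN).trans ?_
  gcongr

/-- The number of elements of the dyadic box at which the value of `F` is divisible by no element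
of `P`. -/
noncomputable def siftedCount (F : MvPolynomial ι ℤ) (N : ι → ℕ) (P : Finset ℕ) : ℕ :=
  ((dyadicBox N).filter fun x ↦
    ∀ p ∈ P, ¬ (p : ℤ) ∣ MvPolynomial.eval (fun i ↦ (x i : ℤ)) F).card

theorem sq_mul_siftedCount_le (F : MvPolynomial ι ℤ) {P : Finset ℕ} (hP : ∀ p ∈ P, p.Prime)
    {N : ι → ℕ} {M z : ℕ} (hzM : z ^ 2 ≤ M) (hN : ∀ i, M ≤ N i)
    (hlt : ∀ p ∈ P, rootCount F p < p ^ Fintype.card ι) :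
    (∑ s ∈ sieveSupport P z, ∏ p ∈ s, rootDensity F p / (1 - rootDensity F p)) ^ 2 *
        siftedCount F N P ≤
      (∏ i, (N i : ℝ)) *
          (∑ s ∈ sieveSupport P z, ∏ p ∈ s, rootDensity F p / (1 - rootDensity F p)) +
        (z : ℝ) ^ 2 * ((∏ i, (N i : ℝ)) * (2 ^ Fintype.card ι * ((z ^ 2 : ℕ) / M)) *
          z ^ (4 * Fintype.card ι + 2)) := by
  have hcard : ((dyadicBox N).card : ℝ) = ∏ i, (N i : ℝ) := by
    rw [card_dyadicBox, Nat.cast_prod]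
  have sieve := sq_mul_card_sifted_le (dyadicBox N)
    (fun (p : ℕ) x ↦ (p : ℤ) ∣ MvPolynomial.eval (fun i ↦ (x i : ℤ)) F)
    (D := sieveSupport P z) (δ := rootDensity F)
    (R := (∏ i, (N i : ℝ)) * (2 ^ Fintype.card ι * ((z ^ 2 : ℕ) / M)))
    (fun s hs ↦ (mem_sieveSupport.1 hs).1) (fun p _ ↦ rootDensity_nonneg F p)
    (fun p hp ↦ rootDensity_lt_one (hlt p hp)) (by positivity)
    (fun s hs t ht r hr ↦ ?_) fun s hs t ht ↦ prod_union_two_div_le hP hlt hs ht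
  · rw [hcard] at sieve
    refine sieve.trans ?_
    gcongr
    exact card_sieveSupport_le hP z
  · have hst := Finset.union_subset (mem_sieveSupport.1 hs).1 (mem_sieveSupport.1 ht).1
    rw [hcard]
    exact abs_card_filter_forall_dvd_eval_sub_le F (fun p hp ↦ hP p (hst (hr hp)))
      ((prod_le_prod_of_subset_primes hP hr hst).trans (prod_union_le_sq hP hs ht)) hzM hN

theorem siftedCount_mul_sieveMass_le (F : MvPolynomial ι ℤ) {κ : ℝ} (hκ : 0 ≤ κ) {P : Finset ℕ}
    (hP : ∀ p ∈ P, p.Prime) {N : ι → ℕ} {M z : ℕ} (hz : 0 < z)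
    (hzM : z ^ (4 * Fintype.card ι + 6) ≤ M) (hN : ∀ i, M ≤ N i)
    (hlt : ∀ p ∈ P, rootCount F p < p ^ Fintype.card ι)
    (hle : ∀ p ∈ P, κ * p ^ Fintype.card ι ≤ (p + κ) * rootCount F p) :
    siftedCount F N P * sieveMass κ P z ≤ (2 ^ Fintype.card ι + 1) * ∏ i, (N i : ℝ) := by
  have sieve := sq_mul_siftedCount_le F hP ((Nat.pow_le_pow_right hz (by omega)).trans hzM) hN hlt
  set k := Fintype.card ι
  set S := (siftedCount F N P : ℝ)
  set V := ∏ i, (N i : ℝ)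
  set G := ∑ s ∈ sieveSupport P z, ∏ p ∈ s, rootDensity F p / (1 - rootDensity F p)
  have hM : (0 : ℝ) < M := mod_cast (pow_pos hz _).trans_le hzM
  have hmass : sieveMass κ P z ≤ G := Finset.sum_le_sum fun s hs ↦
    Finset.prod_le_prod (fun p _ ↦ by positivity) fun p hp ↦
      have hpP := (mem_sieveSupport.1 hs).1 hp
      div_le_rootDensity_div_one_sub (hP p hpP).pos (hlt p hpP) (hle p hpP)
  have hG1 : 1 ≤ G := by
    calc (1 : ℝ) = ∏ p ∈ ∅, rootDensity F p / (1 - rootDensity F p) := Finset.prod_empty.symm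
      _ ≤ G := Finset.single_le_sum
        (f := fun s ↦ ∏ p ∈ s, rootDensity F p / (1 - rootDensity F p))
        (fun s hs ↦ Finset.prod_nonneg fun p hp ↦ div_nonneg (rootDensity_nonneg F p)
          (sub_nonneg.2 (rootDensity_lt_one (hlt p ((mem_sieveSupport.1 hs).1 hp))).le))
        (mem_sieveSupport.2 ⟨Finset.empty_subset P, Finset.prod_empty.trans_le hz⟩)
  have error : (z : ℝ) ^ 2 * (V * (2 ^ k * ((z ^ 2 : ℕ) / M)) * z ^ (4 * k + 2)) ≤
      V * 2 ^ k * G := by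
    have hzM' : (z : ℝ) ^ (4 * k + 6) / M ≤ 1 := (div_le_one hM).2 (mod_cast hzM)
    calc (z : ℝ) ^ 2 * (V * (2 ^ k * ((z ^ 2 : ℕ) / M)) * z ^ (4 * k + 2))
        = V * 2 ^ k * (z ^ (4 * k + 6) / M) := by push_cast; ring
      _ ≤ V * 2 ^ k * G := by gcongr; exact hzM'.trans hG1
  have hS : 0 ≤ S := Nat.cast_nonneg _
  refine (mul_le_mul_of_nonneg_left hmass hS).trans
    (le_of_mul_le_mul_left ?_ (zero_lt_one.trans_le hG1))
  calc G * (S * G) = G ^ 2 * S := by ring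
    _ ≤ V * G + V * 2 ^ k * G := sieve.trans (by gcongr)
    _ = G * ((2 ^ k + 1) * V) := by ring

theorem siftedCount_mono (F : MvPolynomial ι ℤ) (N : ι → ℕ) {P Q : Finset ℕ} (h : P ⊆ Q) :
    siftedCount F N Q ≤ siftedCount F N P :=
  Finset.card_le_card <| Finset.monotone_filter_right _ fun _ _ hx p hp ↦ hx p (h hp)

theorem siftedCount_le_prod (F : MvPolynomial ι ℤ) (N : ι → ℕ) (P : Finset ℕ) :
    siftedCount F N P ≤ ∏ i, N i :=
  (Finset.card_filter_le _ _).trans_eq (card_dyadicBox N)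

theorem one_le_primeFactorWeight {κ : ℝ} (hκ : 0 ≤ κ) (n : ℕ) : 1 ≤ primeFactorWeight κ n :=
  Finset.prod_const_one.symm.trans_le <| Finset.prod_le_prod (fun _ _ ↦ zero_le_one) fun p _ ↦
    le_add_of_nonneg_right (by positivity)

theorem pow_le_sieveMass_mul_primeFactorWeight (κ l : ℕ) {E : ℕ} (hE : E ≠ 0) :
    (l : ℝ) ^ κ ≤ 4 ^ κ * Real.exp (κ ^ 2) *
      (sieveMass κ (((2 ^ l) ^ κ).primesLE.filter fun p ↦ ¬ p ∣ E) ((2 ^ l) ^ κ) *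
        primeFactorWeight κ E) := by
  have hl : (l : ℝ) ≤ 2 * Real.log (2 ^ l : ℕ) := by
    push_cast
    rw [Real.log_pow]
    nlinarith [Real.log_two_gt_d9, l.cast_nonneg (α := ℝ)]
  calc (l : ℝ) ^ κ ≤ (2 * Real.log (2 ^ l : ℕ)) ^ κ := by gcongr
    _ ≤ 2 ^ κ * (2 ^ κ * Real.exp (κ ^ 2) *
          sieveMass κ ((2 ^ l) ^ κ).primesLE ((2 ^ l) ^ κ)) := by
        rw [mul_pow]
        gcongr
        exact log_pow_le_sieveMass κ (2 ^ l)
    _ = 4 ^ κ * Real.exp (κ ^ 2) * sieveMass κ ((2 ^ l) ^ κ).primesLE ((2 ^ l) ^ κ) := by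
        rw [show (4 : ℝ) = 2 * 2 by norm_num, mul_pow]
        ring
    _ ≤ _ := by
        gcongr
        exact sieveMass_le_mul_primeFactorWeight κ.cast_nonneg
          (fun p ↦ Nat.prime_of_mem_primesLE) hE _

theorem pow_mul_siftedCount_le (F : MvPolynomial ι ℤ) {κ l m E : ℕ} {N : ι → ℕ} (hE : E ≠ 0)
    (hlm : κ * (4 * Fintype.card ι + 6) * l ≤ m) (hN : ∀ i, 2 ^ m ≤ N i)
    (hlt : ∀ p, p.Prime → ¬ p ∣ E → rootCount F p < p ^ Fintype.card ι)
    (hle : ∀ p, p.Prime → ¬ p ∣ E →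
      (κ : ℝ) * p ^ Fintype.card ι ≤ (p + κ) * rootCount F p) :
    (l : ℝ) ^ κ * siftedCount F N (2 ^ m).primesLE ≤
      4 ^ κ * Real.exp (κ ^ 2) * (2 ^ Fintype.card ι + 1) * (∏ i, (N i : ℝ)) *
        primeFactorWeight κ E := by
  set k := Fintype.card ι
  set z := (2 ^ l) ^ κ
  set P := z.primesLE.filter fun p ↦ ¬ p ∣ E
  set S := (siftedCount F N (2 ^ m).primesLE : ℝ)
  have hz : z = 2 ^ (l * κ) := (pow_mul 2 l κ).symm
  have hz_pow : z ^ (4 * k + 6) ≤ 2 ^ m := by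
    rw [hz, ← pow_mul]
    exact Nat.pow_le_pow_right two_pos (by linarith)
  have hPm : P ⊆ (2 ^ m).primesLE := (Finset.filter_subset _ _).trans fun p hp ↦
    have hp := Nat.mem_primesLE.1 hp
    Nat.mem_primesLE.2 ⟨hp.1.trans ((Nat.le_self_pow (by omega) z).trans hz_pow), hp.2⟩
  have hPprime (p : ℕ) (hp : p ∈ P) : p.Prime :=
    Nat.prime_of_mem_primesLE (Finset.mem_of_mem_filter p hp)
  have sieve : S * sieveMass κ P z ≤ (2 ^ k + 1) * ∏ i, (N i : ℝ) := by
    refine le_trans ?_ (siftedCount_mul_sieveMass_le F κ.cast_nonneg hPprime (by positivity) hz_pow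
      hN (fun p hp ↦ hlt p (hPprime p hp) (Finset.mem_filter.1 hp).2)
      fun p hp ↦ hle p (hPprime p hp) (Finset.mem_filter.1 hp).2)
    have := sieveMass_nonneg κ.cast_nonneg P z
    have : S ≤ siftedCount F N P := Nat.cast_le.2 (siftedCount_mono F N hPm)
    gcongr
  have hw := one_le_primeFactorWeight κ.cast_nonneg E
  calc (l : ℝ) ^ κ * S
      ≤ 4 ^ κ * Real.exp (κ ^ 2) * (sieveMass κ P z * primeFactorWeight κ E) * S :=
        mul_le_mul_of_nonneg_right (pow_le_sieveMass_mul_primeFactorWeight κ l hE)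
          (Nat.cast_nonneg _)
    _ = 4 ^ κ * Real.exp (κ ^ 2) * (S * sieveMass κ P z) * primeFactorWeight κ E := by ring
    _ ≤ 4 ^ κ * Real.exp (κ ^ 2) * ((2 ^ k + 1) * ∏ i, (N i : ℝ)) * primeFactorWeight κ E := by
        gcongr
    _ = _ := by ring

theorem exists_siftedCount_le (ι : Type*) [Fintype ι] [DecidableEq ι] (κ : ℕ) :
    ∃ C : ℝ, 0 < C ∧ ∀ (F : MvPolynomial ι ℤ) (m E : ℕ) (N : ι → ℕ), E ≠ 0 →
      (∀ i, 2 ^ m ≤ N i) →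
      (∀ p, p.Prime → ¬ p ∣ E → rootCount F p < p ^ Fintype.card ι) →
      (∀ p, p.Prime → ¬ p ∣ E →
        (κ : ℝ) * p ^ Fintype.card ι ≤ (p + κ) * rootCount F p) →
      siftedCount F N (2 ^ m).primesLE ≤
        C * (∏ i, (N i : ℝ)) * primeFactorWeight κ E / (m + 1) ^ κ := by
  set q := κ * (4 * Fintype.card ι + 6) + 1
  set A : ℝ := 4 ^ κ * Real.exp (κ ^ 2) * (2 ^ Fintype.card ι + 1)
  refine ⟨q ^ κ * (2 ^ (κ - 1) * (A + 1)), by positivity, fun F m E N hE hN hlt hle ↦ ?_⟩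
  set l := m / q
  set S := (siftedCount F N (2 ^ m).primesLE : ℝ)
  set V := ∏ i, (N i : ℝ)
  set w := primeFactorWeight κ E
  have hlm : κ * (4 * Fintype.card ι + 6) * l ≤ m :=
    (Nat.mul_le_mul_right l (Nat.le_succ _)).trans (Nat.mul_div_le m q)
  have hmq : (m + 1 : ℝ) ≤ q * (l + 1) := by
    exact_mod_cast Nat.lt_mul_div_succ m (Nat.succ_pos _ : 0 < q)
  have trivial_bound : S ≤ V * w := by
    have : S ≤ V :=
      (Nat.cast_le.2 (siftedCount_le_prod F N _)).trans_eq (Nat.cast_prod N _)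
    exact this.trans (le_mul_of_one_le_right (by positivity)
      (one_le_primeFactorWeight κ.cast_nonneg E))
  have sieve_bound : l ^ κ * S ≤ A * V * w := pow_mul_siftedCount_le F hE hlm hN hlt hle
  have : 0 ≤ S := Nat.cast_nonneg _
  rw [le_div_iff₀ (by positivity)]
  calc S * (m + 1) ^ κ ≤ S * (q * (l + 1)) ^ κ := by gcongr
    _ ≤ S * (q ^ κ * (2 ^ (κ - 1) * (l ^ κ + 1 ^ κ))) := by
        rw [mul_pow]
        gcongr
        exact add_pow_le (by positivity) zero_le_one κ
    _ = q ^ κ * (2 ^ (κ - 1) * (l ^ κ * S + S)) := by ring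
    _ ≤ q ^ κ * (2 ^ (κ - 1) * (A * V * w + V * w)) := by gcongr
    _ = q ^ κ * (2 ^ (κ - 1) * (A + 1)) * V * w := by ring

end PolynomialSieve

section Resampling

variable {ι β M : Type*} [Fintype ι] [DecidableEq ι] [AddCommMonoid M]

theorem sum_piFinset_update (s : ι → Finset β) (v : ι) (f : (ι → β) → M) :
    ∑ x ∈ Fintype.piFinset s, ∑ t ∈ s v, f (Function.update x v t) =
      (s v).card • ∑ x ∈ Fintype.piFinset s, f x := by
  rw [← Finset.sum_const, Finset.sum_comm, ← Finset.sum_product', ← Finset.sum_product']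
  have hmem (u : β × (ι → β)) : u ∈ s v ×ˢ Fintype.piFinset s →
      (u.2 v, Function.update u.2 v u.1) ∈ s v ×ˢ Fintype.piFinset s := by
    simp only [Finset.mem_product, Fintype.mem_piFinset]
    grind
  refine Finset.sum_nbij' (fun u ↦ (u.2 v, Function.update u.2 v u.1))
    (fun u ↦ (u.2 v, Function.update u.2 v u.1)) hmem hmem ?_ ?_ fun _ _ ↦ rfl
  all_goals simp

theorem sum_piFinset_piecewise {s t : ι → Finset β} {σ : Finset ι} (h : ∀ i ∈ σ, s i = t i)
    (f : (ι → β) → M) :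
    ∑ x ∈ Fintype.piFinset s, ∑ y ∈ Fintype.piFinset t, f (σ.piecewise y x) =
      (Fintype.piFinset t).card • ∑ x ∈ Fintype.piFinset s, f x := by
  rw [← Finset.sum_const, Finset.sum_comm, ← Finset.sum_product', ← Finset.sum_product']
  have hmem (u : (ι → β) × (ι → β)) : u ∈ Fintype.piFinset t ×ˢ Fintype.piFinset s →
      (σ.piecewise u.2 u.1, σ.piecewise u.1 u.2) ∈
        Fintype.piFinset t ×ˢ Fintype.piFinset s := by
    simp only [Finset.mem_product, Fintype.mem_piFinset]
    grind [Finset.piecewise]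
  refine Finset.sum_nbij' (fun u ↦ (σ.piecewise u.2 u.1, σ.piecewise u.1 u.2))
    (fun u ↦ (σ.piecewise u.2 u.1, σ.piecewise u.1 u.2)) hmem hmem ?_ ?_ fun _ _ ↦ rfl
  all_goals simp [Finset.piecewise_same]

end Resampling

section MonomialForms

theorem card_add_card_add_card_le {α : Type*} [DecidableEq α] (s t u : Finset α) :
    s.card + t.card + u.card ≤
      (s ∪ t ∪ u).card + (s ∩ t).card + (s ∩ u).card + (t ∩ u).card := by
  have hst := Finset.card_union_add_card_inter s t
  have hstu := Finset.card_union_add_card_inter (s ∪ t) u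
  have hinter := Finset.card_union_le (s ∩ u) (t ∩ u)
  rw [← Finset.union_inter_distrib_right] at hinter
  omega

variable {ι K : Type*} [Fintype ι] [DecidableEq ι] [Fintype K] [DecidableEq K]

theorem card_mul_card_eq_sum (A : Finset (ι → K)) (v : ι) :
    Fintype.card K * A.card =
      ∑ c : ι → K, (Finset.univ.filter fun t ↦ Function.update c v t ∈ A).card := by
  have := sum_piFinset_update (fun _ : ι ↦ (Finset.univ : Finset K)) v
    fun c ↦ if c ∈ A then 1 else 0
  simp only [Fintype.piFinset_univ, Finset.card_univ, smul_eq_mul, ← Finset.card_filter,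
    Finset.filter_univ_mem] at this
  exact this.symm

variable [Field K]

/-- The zeros in `K ^ ι` of the form `a * ∏ v ∈ V, X v + 1`. -/
def formZeros (a : K) (V : Finset ι) : Finset (ι → K) :=
  Finset.univ.filter fun c ↦ a * ∏ v ∈ V, c v + 1 = 0

theorem mem_formZeros {a : K} {V : Finset ι} {c : ι → K} :
    c ∈ formZeros a V ↔ a * ∏ v ∈ V, c v + 1 = 0 := by
  simp only [formZeros, Finset.mem_filter_univ]

theorem update_mem_formZeros {a : K} {V : Finset ι} {v : ι} (hv : v ∈ V) {c : ι → K} {t : K} :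
    Function.update c v t ∈ formZeros a V ↔ t * (a * ∏ w ∈ V \ {v}, c w) = -1 := by
  rw [mem_formZeros, Finset.prod_update_of_mem hv, mul_left_comm, eq_neg_iff_add_eq_zero]

theorem card_filter_update_mem_formZeros_le_one {a : K} {V : Finset ι} {v : ι} (hv : v ∈ V)
    (c : ι → K) :
    (Finset.univ.filter fun t ↦ Function.update c v t ∈ formZeros a V).card ≤ 1 := by
  refine Finset.card_le_one.2 fun t ht u hu ↦ ?_
  rw [Finset.mem_filter_univ, update_mem_formZeros hv] at ht hu
  refine mul_right_cancel₀ (fun h ↦ ?_) (ht.trans hu.symm)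
  rw [h, mul_zero] at ht
  exact neg_ne_zero.2 one_ne_zero ht.symm

theorem card_mul_card_formZeros_le (a : K) {V : Finset ι} (hV : V.Nonempty) :
    Fintype.card K * (formZeros a V).card ≤ Fintype.card K ^ Fintype.card ι := by
  obtain ⟨v, hv⟩ := hV
  calc Fintype.card K * (formZeros a V).card
      = ∑ c : ι → K, (Finset.univ.filter fun t ↦ Function.update c v t ∈ formZeros a V).card :=
        card_mul_card_eq_sum _ v
    _ ≤ ∑ _c : ι → K, 1 :=
        Finset.sum_le_sum fun c _ ↦ card_filter_update_mem_formZeros_le_one hv c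
    _ = Fintype.card K ^ Fintype.card ι := by simp

theorem card_mul_card_filter_prod_eq_zero_le (V : Finset ι) :
    Fintype.card K * (Finset.univ.filter fun c : ι → K ↦ ∏ v ∈ V, c v = 0).card ≤
      V.card * Fintype.card K ^ Fintype.card ι := by
  have hyperplane (v : ι) : Fintype.card K * (Finset.univ.filter fun c : ι → K ↦ c v = 0).card =
      Fintype.card K ^ Fintype.card ι := by
    rw [card_mul_card_eq_sum _ v]
    simp [Finset.filter_eq']
  calc Fintype.card K * (Finset.univ.filter fun c : ι → K ↦ ∏ v ∈ V, c v = 0).card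
      ≤ Fintype.card K * ∑ v ∈ V, (Finset.univ.filter fun c : ι → K ↦ c v = 0).card := by
        refine Nat.mul_le_mul_left _ <|
          (Finset.card_le_card fun c hc ↦ ?_).trans Finset.card_biUnion_le
        simpa [Finset.prod_eq_zero_iff] using hc
    _ = V.card * Fintype.card K ^ Fintype.card ι := by
        rw [Finset.mul_sum, Finset.sum_congr rfl fun v _ ↦ hyperplane v, Finset.sum_const,
          smul_eq_mul]

theorem card_pow_succ_le_card_formZeros {a : K} (ha : a ≠ 0) {V : Finset ι} (hV : V.Nonempty) :
    Fintype.card K ^ (Fintype.card ι + 1) ≤ Fintype.card K ^ 2 * (formZeros a V).card +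
      (V.card - 1) * Fintype.card K ^ Fintype.card ι := by
  obtain ⟨v, hv⟩ := hV
  set q := Fintype.card K
  have fiber (c : ι → K) : 1 ≤ (Finset.univ.filter fun t ↦
      Function.update c v t ∈ formZeros a V).card + if ∏ w ∈ V \ {v}, c w = 0 then 1 else 0 := by
    split_ifs with hc
    · exact Nat.le_add_left 1 _
    · refine Finset.card_pos.2 ⟨-1 / (a * ∏ w ∈ V \ {v}, c w), ?_⟩
      rw [Finset.mem_filter_univ, update_mem_formZeros hv, div_mul_cancel₀ _ (mul_ne_zero ha hc)]
  have degenerate := card_mul_card_filter_prod_eq_zero_le (K := K) (V \ {v})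
  rw [Finset.card_sdiff_of_subset (Finset.singleton_subset_iff.2 hv), Finset.card_singleton]
    at degenerate
  calc q ^ (Fintype.card ι + 1) = q * ∑ _c : ι → K, 1 := by simp [q, pow_succ']
    _ ≤ q * ∑ c : ι → K, ((Finset.univ.filter fun t ↦ Function.update c v t ∈ formZeros a V).card +
          if ∏ w ∈ V \ {v}, c w = 0 then 1 else 0) :=
        Nat.mul_le_mul_left q (Finset.sum_le_sum fun c _ ↦ fiber c)
    _ = q ^ 2 * (formZeros a V).card +
          q * (Finset.univ.filter fun c : ι → K ↦ ∏ w ∈ V \ {v}, c w = 0).card := by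
        rw [Finset.sum_add_distrib, ← card_mul_card_eq_sum, Finset.card_filter]
        ring
    _ ≤ _ := Nat.add_le_add_left degenerate _

theorem sq_mul_card_formZeros_inter_le {a b : K} {V W : Finset ι} (hV : V.Nonempty)
    (hW : W.Nonempty) (hVW : V = W → a ≠ b) :
    Fintype.card K ^ 2 * (formZeros a V ∩ formZeros b W).card ≤
      Fintype.card K ^ Fintype.card ι := by
  have of_mem {a b : K} {V W : Finset ι} (hV : V.Nonempty) {v : ι} (hvW : v ∈ W) (hvV : v ∉ V) :
      Fintype.card K ^ 2 * (formZeros a V ∩ formZeros b W).card ≤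
        Fintype.card K ^ Fintype.card ι := by
    refine le_trans ?_ (card_mul_card_formZeros_le a hV)
    rw [sq, mul_assoc]
    refine Nat.mul_le_mul_left _ ?_
    calc Fintype.card K * (formZeros a V ∩ formZeros b W).card
        = ∑ c : ι → K, (Finset.univ.filter fun t ↦
            Function.update c v t ∈ formZeros a V ∩ formZeros b W).card :=
          card_mul_card_eq_sum _ v
      _ ≤ ∑ c : ι → K, if c ∈ formZeros a V then 1 else 0 := Finset.sum_le_sum fun c _ ↦ ?_
      _ = (formZeros a V).card := by rw [← Finset.card_filter, Finset.filter_univ_mem]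
    simp_rw [Finset.mem_inter, mem_formZeros (a := a), Finset.prod_update_of_notMem hvV]
    split_ifs with hc
    · simp only [hc, true_and]
      exact card_filter_update_mem_formZeros_le_one hvW c
    · simp [hc]
  by_cases h : V = W
  · subst h
    have : formZeros a V ∩ formZeros b V = ∅ := Finset.eq_empty_of_forall_notMem fun c hc ↦ by
      obtain ⟨ha, hb⟩ := Finset.mem_inter.1 hc
      rw [mem_formZeros] at ha hb
      refine hVW rfl (mul_right_cancel₀ (fun h ↦ ?_) (add_right_cancel (ha.trans hb.symm)))
      simp [h] at ha
    simp [this]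
  · have : ∃ v, v ∈ W ∧ v ∉ V ∨ v ∈ V ∧ v ∉ W := by
      by_contra! hall
      exact h (Finset.ext fun v ↦ ⟨(hall v).2, (hall v).1⟩)
    obtain ⟨v, ⟨hvW, hvV⟩ | ⟨hvV, hvW⟩⟩ := this
    · exact of_mem hV hvW hvV
    · rw [Finset.inter_comm]
      exact of_mem hW hvV hvW

theorem three_mul_le_card_union_formZeros (hq : 3 ≤ Fintype.card K) {a : Fin 3 → K}
    (ha : ∀ i, a i ≠ 0) {V : Fin 3 → Finset ι} (hV : ∀ i, (V i).Nonempty)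
    (hsum : ∑ i, (V i).card ≤ 4) (hne : ∀ i j, i ≠ j → V i = V j → a i ≠ a j) :
    3 * Fintype.card K ^ Fintype.card ι ≤ (Fintype.card K + 3) *
      (formZeros (a 0) (V 0) ∪ formZeros (a 1) (V 1) ∪ formZeros (a 2) (V 2)).card := by
  set q := Fintype.card K
  set Q := q ^ Fintype.card ι
  set Z := fun i ↦ formZeros (a i) (V i)
  have bonferroni := card_add_card_add_card_le (Z 0) (Z 1) (Z 2)
  have lower (i : Fin 3) : q * Q ≤ q ^ 2 * (Z i).card + ((V i).card - 1) * Q := by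
    rw [← pow_succ']
    exact card_pow_succ_le_card_formZeros (ha i) (hV i)
  have upper (i j : Fin 3) (hij : i ≠ j) : q ^ 2 * (Z i ∩ Z j).card ≤ Q :=
    sq_mul_card_formZeros_inter_le (hV i) (hV j) (hne i j hij)
  have excess : ((V 0).card - 1) + ((V 1).card - 1) + ((V 2).card - 1) ≤ 1 := by
    rw [Fin.sum_univ_three] at hsum
    have hpos (i : Fin 3) : 1 ≤ (V i).card := Finset.card_pos.2 (hV i)
    have := hpos 0
    have := hpos 1
    have := hpos 2
    omega
  set ρ := (Z 0 ∪ Z 1 ∪ Z 2).card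
  have main : 3 * q * Q ≤ q ^ 2 * ρ + 4 * Q := by
    nlinarith [lower 0, lower 1, lower 2, upper 0 1 (by decide), upper 0 2 (by decide),
      upper 1 2 (by decide), Nat.mul_le_mul_left (q ^ 2) bonferroni, Nat.mul_le_mul_right Q excess]
  have hq0 : 0 < q := by omega
  refine le_of_mul_le_mul_left ?_ (pow_pos hq0 2)
  nlinarith [Nat.mul_le_mul_left (q + 3) main, Nat.mul_le_mul_right Q hq]

end MonomialForms

section FormSieve

variable {ι : Type*}

/-- The integer polynomial `∏ i, (a i * ∏ v ∈ V i, X v + 1)`. -/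
noncomputable def formProduct (a : Fin 3 → ℕ) (V : Fin 3 → Finset ι) : MvPolynomial ι ℤ :=
  ∏ i, ((a i : MvPolynomial ι ℤ) * ∏ v ∈ V i, MvPolynomial.X v + 1)

theorem aeval_formProduct {R : Type*} [CommRing R] (a : Fin 3 → ℕ) (V : Fin 3 → Finset ι)
    (c : ι → R) :
    MvPolynomial.aeval c (formProduct a V) = ∏ i, ((a i : R) * ∏ v ∈ V i, c v + 1) := by
  simp only [formProduct, map_prod, map_add, map_mul, map_natCast, map_one, MvPolynomial.aeval_X]

theorem eval_natCast_formProduct (a : Fin 3 → ℕ) (V : Fin 3 → Finset ι) (x : ι → ℕ) :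
    MvPolynomial.eval (fun v ↦ (x v : ℤ)) (formProduct a V) =
      (∏ i, (a i * ∏ v ∈ V i, x v + 1) : ℕ) := by
  rw [← MvPolynomial.aeval_eq_eval, aeval_formProduct]
  push_cast
  rfl

variable [Fintype ι]

theorem rootCount_formProduct [DecidableEq ι] (a : Fin 3 → ℕ) (V : Fin 3 → Finset ι) (p : ℕ)
    [Fact p.Prime] :
    rootCount (formProduct a V) p =
      (formZeros (a 0 : ZMod p) (V 0) ∪ formZeros (a 1 : ZMod p) (V 1) ∪
        formZeros (a 2 : ZMod p) (V 2)).card := by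
  rw [rootCount, Nat.card_eq_fintype_card, Fintype.card_subtype]
  congr 1
  ext c
  simp only [Finset.mem_filter_univ, Finset.mem_union, mem_formZeros, aeval_formProduct,
    Fin.prod_univ_three, mul_eq_zero]

theorem rootCount_formProduct_lt (a : Fin 3 → ℕ) {V : Fin 3 → Finset ι}
    (hV : ∀ i, (V i).Nonempty) {p : ℕ} (hp : p.Prime) :
    rootCount (formProduct a V) p < p ^ Fintype.card ι := by
  classical
  have : Fact p.Prime := ⟨hp⟩
  rw [rootCount, Nat.card_eq_fintype_card]
  refine (Fintype.card_subtype_lt (x := 0) ?_).trans_eq (by simp [ZMod.card])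
  rw [aeval_formProduct]
  simp [(hV _).ne_empty]

theorem three_mul_pow_le_rootCount_formProduct {a : Fin 3 → ℕ} {V : Fin 3 → Finset ι}
    (hV : ∀ i, (V i).Nonempty) (hsum : ∑ i, (V i).card ≤ 4) {p : ℕ} (hp : p.Prime) (hp3 : 3 ≤ p)
    (ha : ∀ i, ¬ p ∣ a i) (hne : ∀ i j, i ≠ j → V i = V j → ¬ a i ≡ a j [MOD p]) :
    3 * p ^ Fintype.card ι ≤ (p + 3) * rootCount (formProduct a V) p := by
  classical
  have : Fact p.Prime := ⟨hp⟩
  have := three_mul_le_card_union_formZeros (K := ZMod p) (a := fun i ↦ (a i : ZMod p)) (V := V)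
    (by rwa [ZMod.card]) (fun i ↦ (ZMod.natCast_eq_zero_iff _ _).not.2 (ha i)) hV hsum
    fun i j hij h ↦ (ZMod.natCast_eq_natCast_iff _ _ _).not.2 (hne i j hij h)
  rwa [ZMod.card, ← rootCount_formProduct] at this

theorem primeFactorWeight_mul_le {κ : ℝ} (hκ : 0 ≤ κ) (m n : ℕ) :
    primeFactorWeight κ (m * n) ≤ primeFactorWeight κ m * primeFactorWeight κ n := by
  rcases eq_or_ne m 0 with rfl | hm
  · simpa [primeFactorWeight] using one_le_primeFactorWeight hκ n
  rcases eq_or_ne n 0 with rfl | hn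
  · simpa [primeFactorWeight] using one_le_primeFactorWeight hκ m
  unfold primeFactorWeight
  rw [Nat.primeFactors_mul hm hn, ← Finset.prod_union_inter]
  refine le_mul_of_one_le_right (Finset.prod_nonneg fun p _ ↦ by positivity) ?_
  exact Finset.prod_const_one.symm.trans_le <|
    Finset.prod_le_prod (fun _ _ ↦ zero_le_one) fun p _ ↦ le_add_of_nonneg_right (by positivity)

theorem card_filter_forall_prime_le_siftedCount [DecidableEq ι] (a : Fin 3 → ℕ)
    {V : Fin 3 → Finset ι} (hV : ∀ i, (V i).Nonempty) {M : ℕ} (hM : 0 < M) {N : ι → ℕ}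
    (hN : ∀ v, M ≤ N v) :
    ((dyadicBox N).filter fun x ↦ ∀ i, (a i * ∏ v ∈ V i, x v + 1).Prime).card ≤
      siftedCount (formProduct a V) N M.primesLE := by
  refine Finset.card_le_card fun x hx ↦ ?_
  obtain ⟨hx, hprime⟩ := Finset.mem_filter.1 hx
  refine Finset.mem_filter.2 ⟨hx, fun p hp hdvd ↦ ?_⟩
  obtain ⟨hpM, hp⟩ := Nat.mem_primesLE.1 hp
  rw [eval_natCast_formProduct, Int.natCast_dvd_natCast, hp.prime.dvd_finsetProd_iff] at hdvd
  obtain ⟨i, -, hi⟩ := hdvd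
  rw [(Nat.prime_dvd_prime_iff_eq hp (hprime i)).1 hi] at hpM
  have ha : 0 < a i := Nat.pos_of_ne_zero fun h ↦ by simpa [h, Nat.not_prime_one] using hprime i
  obtain ⟨v, hv⟩ := hV i
  have hxM (w : ι) : M ≤ x w := (hN w).trans (mem_dyadicBox.1 hx w).1
  have hMV : M ≤ ∏ w ∈ V i, x w :=
    (hxM v).trans (Finset.single_le_prod' (f := x) (fun w _ ↦ hM.trans_le (hxM w)) hv)
  exact hpM.not_gt (Nat.lt_succ_of_le (hMV.trans (Nat.le_mul_of_pos_left _ ha)))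

theorem exists_card_filter_forall_prime_le (ι : Type*) [Fintype ι] [DecidableEq ι] :
    ∃ C : ℝ, 0 < C ∧ ∀ (a : Fin 3 → ℕ) (V : Fin 3 → Finset ι) (N : ι → ℕ) (m E : ℕ), E ≠ 0 →
      (∀ i, (V i).Nonempty) → ∑ i, (V i).card ≤ 4 → (∀ v, 2 ^ m ≤ N v) →
      (∀ p, p.Prime → ¬ p ∣ E →
        (∀ i, ¬ p ∣ a i) ∧ ∀ i j, i ≠ j → V i = V j → ¬ a i ≡ a j [MOD p]) →
      (((dyadicBox N).filter fun x ↦ ∀ i, (a i * ∏ v ∈ V i, x v + 1).Prime).card : ℝ) ≤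
        C * (∏ v, (N v : ℝ)) * primeFactorWeight 3 E / (m + 1) ^ 3 := by
  obtain ⟨C, hC, sieve⟩ := exists_siftedCount_le ι 3
  refine ⟨C * primeFactorWeight 3 2, mul_pos hC
    (zero_lt_one.trans_le (one_le_primeFactorWeight zero_le_three 2)),
    fun a V N m E hE hV hsum hN hgood ↦ ?_⟩
  have density (p : ℕ) (hp : p.Prime) (hpE : ¬ p ∣ 2 * E) :
      ((3 : ℕ) : ℝ) * p ^ Fintype.card ι ≤ (p + (3 : ℕ)) * rootCount (formProduct a V) p := by
    have hp3 : 3 ≤ p := hp.two_le.lt_of_ne fun h ↦ hpE (h ▸ dvd_mul_right _ _)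
    obtain ⟨ha, hne⟩ := hgood p hp fun h ↦ hpE (h.mul_left 2)
    exact_mod_cast three_mul_pow_le_rootCount_formProduct hV hsum hp hp3 ha hne
  have count : (((dyadicBox N).filter fun x ↦
      ∀ i, (a i * ∏ v ∈ V i, x v + 1).Prime).card : ℝ) ≤
        siftedCount (formProduct a V) N (2 ^ m).primesLE :=
    Nat.cast_le.2 (card_filter_forall_prime_le_siftedCount a hV (pow_pos two_pos m) hN)
  have sifted := sieve _ m (2 * E) N (mul_ne_zero two_ne_zero hE) hN
    (fun p hp _ ↦ rootCount_formProduct_lt a hV hp) density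
  refine (count.trans sifted).trans ?_
  calc C * (∏ v, (N v : ℝ)) * primeFactorWeight 3 (2 * E) / (m + 1) ^ 3
      ≤ C * (∏ v, (N v : ℝ)) * (primeFactorWeight 3 2 * primeFactorWeight 3 E) / (m + 1) ^ 3 := by
        gcongr
        exact primeFactorWeight_mul_le zero_le_three 2 E
    _ = _ := by ring

end FormSieve

section WeightAverages

theorem sum_one_div_sqrt_le (M : ℕ) : ∑ d ∈ Finset.Icc 1 M, 1 / √(d : ℝ) ≤ 2 * √(M : ℝ) := by
  induction M with
  | zero => simp
  | succ n ih =>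
    have hpos : 0 < √((n + 1 : ℕ) : ℝ) := Real.sqrt_pos.2 (by positivity)
    have hn : √(n : ℝ) ^ 2 = n := Real.sq_sqrt n.cast_nonneg
    have hsucc : √((n + 1 : ℕ) : ℝ) ^ 2 = n + 1 := by
      rw [Real.sq_sqrt (Nat.cast_nonneg _), Nat.cast_succ]
    have increment : 1 / √((n + 1 : ℕ) : ℝ) ≤ 2 * √((n + 1 : ℕ) : ℝ) - 2 * √(n : ℝ) := by
      rw [div_le_iff₀ hpos]
      nlinarith [sq_nonneg (√((n + 1 : ℕ) : ℝ) - √(n : ℝ))]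
    rw [Finset.sum_Icc_succ_top (Nat.succ_pos n)]
    linarith

theorem exists_sum_one_div_sqrt_mul_le :
    ∃ C : ℝ, 0 < C ∧ ∀ M : ℕ, ∑ d ∈ Finset.Icc 1 M, 1 / (√(d : ℝ) * d) ≤ C := by
  have hsum : Summable fun d : ℕ ↦ 1 / (√(d : ℝ) * d) := by
    convert Real.summable_one_div_nat_rpow.2 (by norm_num : (1 : ℝ) < 1 / 2 + 1) using 3 with d
    rw [Real.rpow_add_one' d.cast_nonneg (by norm_num), Real.sqrt_eq_rpow]
  exact ⟨_, add_pos_of_nonneg_of_pos (tsum_nonneg fun d ↦ by positivity) one_pos,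
    fun M ↦ (hsum.sum_le_tsum _ fun d _ ↦ by positivity).trans (le_add_of_nonneg_right zero_le_one)⟩

theorem one_add_div_le_mul_one_add_one_div_sqrt {κ : ℝ} (hκ : 0 ≤ κ) {p : ℕ} (hp : 1 ≤ p) :
    1 + κ / p ≤ (if p < ⌈κ ^ 2⌉₊ then 1 + κ else 1) * (1 + 1 / √(p : ℝ)) := by
  have hp1 : (1 : ℝ) ≤ p := mod_cast hp
  have : 0 < √(p : ℝ) := Real.sqrt_pos.2 (by positivity)
  split_ifs with h
  · have hdiv : κ / p ≤ κ := div_le_self hκ hp1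
    calc 1 + κ / p ≤ 1 + κ := by gcongr
      _ ≤ (1 + κ) * (1 + 1 / √(p : ℝ)) :=
        le_mul_of_one_le_right (by positivity) (le_add_of_nonneg_right (by positivity))
  · have hκp : κ ≤ √(p : ℝ) :=
      Real.le_sqrt_of_sq_le ((Nat.le_ceil _).trans (Nat.cast_le.2 (not_lt.1 h)))
    calc 1 + κ / p ≤ 1 + √(p : ℝ) / p := by gcongr
      _ = 1 * (1 + 1 / √(p : ℝ)) := by rw [Real.sqrt_div_self', one_mul]

theorem prod_primeFactors_one_add_le_sum_divisors {n : ℕ} (hn : n ≠ 0) :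
    ∏ p ∈ n.primeFactors, (1 + 1 / √(p : ℝ)) ≤ ∑ d ∈ n.divisors, 1 / √(d : ℝ) := by
  have primeFactors_prod (s) (hs : s ∈ n.primeFactors.powerset) : (∏ p ∈ s, p).primeFactors = s :=
    Nat.primeFactors_prod fun p hp ↦ Nat.prime_of_mem_primeFactors (Finset.mem_powerset.1 hs hp)
  rw [Finset.prod_one_add]
  refine sum_le_sum_of_injOn (fun s ↦ ∏ p ∈ s, p) (fun s hs ↦ ?_) (fun s hs t ht hst ↦ ?_)
    (fun s _ ↦ ?_) fun d _ ↦ by positivity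
  · exact Nat.mem_divisors.2 ⟨(Finset.prod_dvd_prod_of_subset _ _ _
      (Finset.mem_powerset.1 hs)).trans (Nat.prod_primeFactors_dvd n), hn⟩
  · exact (primeFactors_prod s hs).symm.trans
      ((congrArg Nat.primeFactors hst).trans (primeFactors_prod t ht))
  · rw [Nat.cast_prod, Real.sqrt_prod _ fun p _ ↦ p.cast_nonneg, Finset.prod_div_distrib,
      Finset.prod_const_one]

theorem exists_primeFactorWeight_le_sum_divisors {κ : ℝ} (hκ : 0 ≤ κ) :
    ∃ C : ℝ, 0 < C ∧ ∀ n : ℕ, n ≠ 0 →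
      primeFactorWeight κ n ≤ C * ∑ d ∈ n.divisors, 1 / √(d : ℝ) := by
  set B := ⌈κ ^ 2⌉₊
  refine ⟨(1 + κ) ^ B, by positivity, fun n hn ↦ ?_⟩
  have small : ∏ p ∈ n.primeFactors, (if p < B then 1 + κ else 1) ≤ (1 + κ) ^ B := by
    rw [← Finset.prod_filter, Finset.prod_const]
    refine pow_le_pow_right₀ (le_add_of_nonneg_right hκ) ?_
    calc (n.primeFactors.filter (· < B)).card ≤ (Finset.range B).card :=
          Finset.card_le_card fun p hp ↦ Finset.mem_range.2 (Finset.mem_filter.1 hp).2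
      _ = B := Finset.card_range B
  calc primeFactorWeight κ n
      ≤ ∏ p ∈ n.primeFactors, ((if p < B then 1 + κ else 1) * (1 + 1 / √(p : ℝ))) :=
        Finset.prod_le_prod (fun p _ ↦ by positivity) fun p hp ↦
          one_add_div_le_mul_one_add_one_div_sqrt hκ (Nat.prime_of_mem_primeFactors hp).one_le
    _ ≤ (1 + κ) ^ B * ∑ d ∈ n.divisors, 1 / √(d : ℝ) := by
        rw [Finset.prod_mul_distrib]
        gcongr
        exact prod_primeFactors_one_add_le_sum_divisors hn

theorem exists_sum_primeFactorWeight_le {κ : ℝ} (hκ : 0 ≤ κ) :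
    ∃ C : ℝ, 0 < C ∧ ∀ (N : ℕ) (W : Finset ℕ) (f : ℕ → ℕ), (∀ n ∈ W, f n ≠ 0) →
      (∀ n ∈ W, f n ≤ (2 * N) ^ 2) →
      (∀ d, 0 < d → ((W.filter fun n ↦ d ∣ f n).card : ℝ) ≤ N / d + 1) →
      ∑ n ∈ W, primeFactorWeight κ (f n) ≤ C * N := by
  obtain ⟨C, hC, weight_le⟩ := exists_primeFactorWeight_le_sum_divisors hκ
  obtain ⟨D, hD, sum_le⟩ := exists_sum_one_div_sqrt_mul_le
  refine ⟨C * (D + 4), by positivity, fun N W f hf0 hf hcard ↦ ?_⟩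
  set I := Finset.Icc 1 ((2 * N) ^ 2)
  have divisors_eq (n : ℕ) (hn : n ∈ W) : (f n).divisors = I.filter (· ∣ f n) := by
    ext d
    simp only [I, Nat.mem_divisors, Finset.mem_filter, Finset.mem_Icc]
    exact ⟨fun h ↦ ⟨⟨Nat.pos_of_dvd_of_pos h.1 (Nat.pos_of_ne_zero h.2),
      (Nat.le_of_dvd (Nat.pos_of_ne_zero h.2) h.1).trans (hf n hn)⟩, h.1⟩,
      fun h ↦ ⟨h.2, hf0 n hn⟩⟩
  have hsqrt : √(((2 * N) ^ 2 : ℕ) : ℝ) = 2 * N := by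
    push_cast
    exact Real.sqrt_sq (by positivity)
  calc ∑ n ∈ W, primeFactorWeight κ (f n)
      ≤ ∑ n ∈ W, C * ∑ d ∈ I, if d ∣ f n then 1 / √(d : ℝ) else 0 := by
        refine Finset.sum_le_sum fun n hn ↦ (weight_le _ (hf0 n hn)).trans_eq ?_
        rw [divisors_eq n hn, Finset.sum_filter]
    _ = C * ∑ d ∈ I, (W.filter fun n ↦ d ∣ f n).card * (1 / √(d : ℝ)) := by
        rw [← Finset.mul_sum, Finset.sum_comm]
        simp_rw [← Finset.sum_filter, Finset.sum_const, nsmul_eq_mul]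
    _ ≤ C * ∑ d ∈ I, (N / d + 1) * (1 / √(d : ℝ)) := by
        gcongr with d hd
        exact hcard d (Finset.mem_Icc.1 hd).1
    _ = C * (N * ∑ d ∈ I, 1 / (√(d : ℝ) * d) + ∑ d ∈ I, 1 / √(d : ℝ)) := by
        rw [Finset.mul_sum I _ (N : ℝ), ← Finset.sum_add_distrib]
        congr! 2 with d
        rw [add_mul, one_mul, div_mul_div_comm, mul_comm (d : ℝ), mul_one_div, mul_one]
    _ ≤ C * (N * D + 2 * (2 * N)) := by
        gcongr
        · exact sum_le _
        · exact (sum_one_div_sqrt_le _).trans_eq (by rw [hsqrt])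
    _ = C * (D + 4) * N := by ring

theorem card_filter_dvd_mul_sub_le {a d k : ℕ} (hak : a.Coprime k) (hd : 0 < d) (N : ℕ) :
    (((Finset.Ico N (2 * N)).filter fun n ↦ d ∣ ((n * a : ℕ) - (k : ℤ)).natAbs).card : ℝ) ≤
      N / d + 1 := by
  set S := (Finset.Ico N (2 * N)).filter fun n ↦ d ∣ ((n * a : ℕ) - (k : ℤ)).natAbs
  have hS {n : ℕ} (hn : n ∈ S) : (d : ℤ) ∣ (n * a : ℕ) - (k : ℤ) :=
    Int.natCast_dvd.2 (Finset.mem_filter.1 hn).2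
  rcases S.eq_empty_or_nonempty with hempty | ⟨n₀, hn₀⟩
  · rw [hempty, Finset.card_empty, Nat.cast_zero]
    positivity
  have had : a.Coprime d := by
    obtain ⟨c, hc⟩ := hS hn₀
    have hk : (k : ℤ) = d * -c + a * n₀ := by
      push_cast at hc
      linarith
    rw [← Nat.isCoprime_iff_coprime, hk, IsCoprime.add_mul_left_right_iff] at hak
    exact Nat.isCoprime_iff_coprime.1 hak.of_mul_right_left
  have residue_class : S ⊆ (Finset.Ico N (2 * N)).filter fun n : ℕ ↦ (n : ZMod d) = n₀ :=
    fun n hn ↦ Finset.mem_filter.2 ⟨(Finset.mem_filter.1 hn).1, by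
      have := dvd_sub (hS hn) (hS hn₀)
      rw [sub_sub_sub_cancel_right, ← Nat.modEq_iff_dvd] at this
      exact (ZMod.natCast_eq_natCast_iff _ _ _).2 (this.cancel_right_of_coprime had.symm).symm⟩
  calc (S.card : ℝ) ≤ ((Finset.Ico N (2 * N)).filter fun n : ℕ ↦ (n : ZMod d) = n₀).card :=
        Nat.cast_le.2 (Finset.card_le_card residue_class)
    _ ≤ N / d + 1 := by
        linarith [(abs_le.1 (abs_card_filter_natCast_eq_sub_le N hd n₀)).2]

theorem exists_sum_primeFactorWeight_mul_sub_le {κ : ℝ} (hκ : 0 ≤ κ) :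
    ∃ C : ℝ, 0 < C ∧ ∀ N a k : ℕ, a.Coprime k → a ≤ 2 * N → k ≤ (2 * N) ^ 2 →
      ∑ n ∈ (Finset.Ico N (2 * N)).filter (fun n ↦ n * a ≠ k),
        primeFactorWeight κ ((n * a : ℕ) - (k : ℤ)).natAbs ≤ C * N := by
  obtain ⟨C, hC, sum_le⟩ := exists_sum_primeFactorWeight_le hκ
  refine ⟨C, hC, fun N a k hak ha hk ↦ sum_le N _ (fun n ↦ ((n * a : ℕ) - (k : ℤ)).natAbs)
    (fun n hn h ↦ ?_) (fun n hn ↦ ?_) fun d hd ↦ ?_⟩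
  · exact (Finset.mem_filter.1 hn).2 (Int.natCast_inj.1 (sub_eq_zero.1 (Int.natAbs_eq_zero.1 h)))
  · have hn := (Finset.mem_Ico.1 (Finset.mem_filter.1 hn).1).2
    have : n * a ≤ (2 * N) ^ 2 := sq (2 * N) ▸ Nat.mul_le_mul hn.le ha
    omega
  · refine le_trans (Nat.cast_le.2 (Finset.card_le_card ?_)) (card_filter_dvd_mul_sub_le hak hd N)
    exact Finset.filter_subset_filter _ (Finset.filter_subset _ _)

variable {ι : Type*}

/-- The coprimality and distinctness of the products of the coordinates over `A` and over `B`;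
without it, their difference need not have few prime factors on average. -/
def CoprimeProducts (A B : Finset ι) (x : ι → ℕ) : Prop :=
  (∏ v ∈ A, x v).Coprime (∏ v ∈ B, x v) ∧ ∏ v ∈ A, x v ≠ ∏ v ∈ B, x v

instance (A B : Finset ι) : DecidablePred (CoprimeProducts A B) :=
  fun _ ↦ inferInstanceAs (Decidable (_ ∧ _))

/-- The distance between the products of the coordinates over `A` and over `B`. -/
def productDistance (A B : Finset ι) (x : ι → ℕ) : ℕ :=
  ((∏ v ∈ A, x v : ℕ) - ((∏ v ∈ B, x v : ℕ) : ℤ)).natAbs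

theorem coprimeProducts_comm {A B : Finset ι} {x : ι → ℕ} :
    CoprimeProducts A B x ↔ CoprimeProducts B A x :=
  and_congr Nat.coprime_comm ne_comm

theorem productDistance_comm (A B : Finset ι) (x : ι → ℕ) :
    productDistance A B x = productDistance B A x := by
  rw [productDistance, ← Int.natAbs_neg, neg_sub, productDistance]

variable [Fintype ι] [DecidableEq ι]

theorem sum_dyadicBox_le_of_sum_update_le {N : ι → ℕ} {v : ι} (hv : 0 < N v) {f : (ι → ℕ) → ℝ}
    {B : ℝ} (h : ∀ x ∈ dyadicBox N,
      ∑ t ∈ Finset.Ico (N v) (2 * N v), f (Function.update x v t) ≤ B * N v) :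
    ∑ x ∈ dyadicBox N, f x ≤ B * ∏ i, (N i : ℝ) := by
  have hv' : (0 : ℝ) < N v := Nat.cast_pos.2 hv
  have hcard : (Finset.Ico (N v) (2 * N v)).card = N v := by
    rw [Nat.card_Ico, two_mul, Nat.add_sub_cancel]
  have resample := sum_piFinset_update (fun i ↦ Finset.Ico (N i) (2 * N i)) v f
  rw [hcard, nsmul_eq_mul] at resample
  refine le_of_mul_le_mul_left (resample.symm.trans_le ?_) hv'
  calc _ ≤ ∑ _x ∈ dyadicBox N, B * N v := Finset.sum_le_sum h
    _ = N v * (B * ∏ i, (N i : ℝ)) := by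
        rw [Finset.sum_const, card_dyadicBox, nsmul_eq_mul, Nat.cast_prod]
        ring

theorem exists_sum_dyadicBox_primeFactorWeight_apply_le {κ : ℝ} (hκ : 0 ≤ κ) :
    ∃ C : ℝ, 0 < C ∧ ∀ (N : ι → ℕ) (v : ι), 0 < N v →
      ∑ x ∈ dyadicBox N, primeFactorWeight κ (x v) ≤ C * ∏ i, (N i : ℝ) := by
  obtain ⟨C, hC, average⟩ := exists_sum_primeFactorWeight_mul_sub_le hκ
  refine ⟨C, hC, fun N v hv ↦ sum_dyadicBox_le_of_sum_update_le hv fun x _ ↦ ?_⟩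
  have := average (N v) 1 0 (Nat.coprime_one_left 0) (by omega) (Nat.zero_le _)
  rw [Finset.filter_true_of_mem fun n hn ↦ by have := Finset.mem_Ico.1 hn; omega] at this
  simpa using this

theorem prod_le_two_mul_pow {N x : ι → ℕ} (hx : x ∈ dyadicBox N) {A : Finset ι} {M : ℕ}
    (hM : ∀ v ∈ A, N v ≤ M) : ∏ v ∈ A, x v ≤ (2 * M) ^ A.card :=
  Finset.prod_le_pow_card A x (2 * M) fun v hv ↦
    (mem_dyadicBox.1 hx v).2.le.trans (Nat.mul_le_mul_left 2 (hM v hv))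

theorem exists_sum_filter_primeFactorWeight_productDistance_le_of_max {κ : ℝ} (hκ : 0 ≤ κ) :
    ∃ C : ℝ, 0 < C ∧ ∀ (N : ι → ℕ) (A B : Finset ι) (v : ι), Disjoint A B → A.card = 2 →
      B.card = 2 → v ∈ A → 0 < N v → (∀ w ∈ A ∪ B, N w ≤ N v) →
      ∑ x ∈ (dyadicBox N).filter (CoprimeProducts A B),
        primeFactorWeight κ (productDistance A B x) ≤ C * ∏ i, (N i : ℝ) := by
  obtain ⟨C, hC, average⟩ := exists_sum_primeFactorWeight_mul_sub_le hκ
  refine ⟨C, hC, fun N A B v hAB hA hB hv hNv hmax ↦ ?_⟩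
  rw [Finset.sum_filter]
  refine sum_dyadicBox_le_of_sum_update_le hNv fun x hx ↦ ?_
  set a := ∏ w ∈ A \ {v}, x w
  set k := ∏ w ∈ B, x w
  have hprodA (t : ℕ) : ∏ w ∈ A, Function.update x v t w = t * a :=
    Finset.prod_update_of_mem hv x t
  have hprodB (t : ℕ) : ∏ w ∈ B, Function.update x v t w = k :=
    Finset.prod_update_of_notMem (Finset.disjoint_left.1 hAB hv) x t
  simp only [CoprimeProducts, productDistance, hprodA, hprodB]
  by_cases hak : a.Coprime k
  · have ha : a ≤ 2 * N v := by
      have := prod_le_two_mul_pow hx (A := A \ {v}) fun w hw ↦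
        hmax w (Finset.mem_union_left B (Finset.mem_sdiff.1 hw).1)
      rwa [Finset.card_sdiff_of_subset (Finset.singleton_subset_iff.2 hv), hA,
        Finset.card_singleton, pow_one] at this
    have hk : k ≤ (2 * N v) ^ 2 :=
      hB ▸ prod_le_two_mul_pow hx fun w hw ↦ hmax w (Finset.mem_union_right A hw)
    refine le_trans ?_ (average (N v) a k hak ha hk)
    rw [← Finset.sum_filter]
    exact Finset.sum_le_sum_of_subset_of_nonneg
      (Finset.monotone_filter_right _ fun t _ ht ↦ ht.2) fun t _ _ ↦
        zero_le_one.trans (one_le_primeFactorWeight hκ _)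
  · rw [Finset.sum_eq_zero fun t _ ↦ if_neg fun h ↦ hak h.1.coprime_mul_left]
    positivity

theorem exists_sum_filter_primeFactorWeight_productDistance_le {κ : ℝ} (hκ : 0 ≤ κ) :
    ∃ C : ℝ, 0 < C ∧ ∀ (N : ι → ℕ) (A B : Finset ι), (∀ v, 0 < N v) → Disjoint A B →
      A.card = 2 → B.card = 2 →
      ∑ x ∈ (dyadicBox N).filter (CoprimeProducts A B),
        primeFactorWeight κ (productDistance A B x) ≤ C * ∏ i, (N i : ℝ) := by
  obtain ⟨C, hC, of_max⟩ :=
    exists_sum_filter_primeFactorWeight_productDistance_le_of_max (ι := ι) hκ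
  refine ⟨C, hC, fun N A B hN hAB hA hB ↦ ?_⟩
  have hne : (A ∪ B).Nonempty :=
    (Finset.card_pos.1 (hA ▸ two_pos)).mono Finset.subset_union_left
  obtain ⟨v, hv, hmax⟩ := Finset.exists_max_image (A ∪ B) N hne
  rcases Finset.mem_union.1 hv with hvA | hvB
  · exact of_max N A B v hAB hA hB hvA (hN v) hmax
  · rw [Finset.filter_congr fun x _ ↦ coprimeProducts_comm]
    simp only [productDistance_comm A B]
    exact of_max N B A v hAB.symm hB hA hvB (hN v) (by rwa [Finset.union_comm])

end WeightAverages

section AdmissibleTuples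

theorem primeFactorWeight_pow_le {κ : ℝ} (hκ : 0 ≤ κ) (k n : ℕ) :
    primeFactorWeight κ n ^ k ≤ primeFactorWeight ((1 + κ) ^ k - 1) n := by
  rw [primeFactorWeight, primeFactorWeight, ← Finset.prod_pow]
  refine Finset.prod_le_prod (fun p _ ↦ by positivity) fun p hp ↦ ?_
  have hp1 : (1 : ℝ) ≤ p := mod_cast (Nat.prime_of_mem_primeFactors hp).one_le
  simpa only [div_eq_mul_inv] using
    one_add_mul_pow_le hκ (by positivity) (inv_le_one_of_one_le₀ hp1) k

theorem primeFactorWeight_prod_le {κ : ℝ} (hκ : 0 ≤ κ) {α : Type*} (s : Finset α) (f : α → ℕ) :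
    primeFactorWeight κ (∏ i ∈ s, f i) ≤ ∏ i ∈ s, primeFactorWeight κ (f i) := by
  induction s using Finset.cons_induction with
  | empty => simp [primeFactorWeight]
  | cons i s hi ih =>
    rw [Finset.prod_cons, Finset.prod_cons]
    exact (primeFactorWeight_mul_le hκ _ _).trans
      (mul_le_mul_of_nonneg_left ih (zero_le_one.trans (one_le_primeFactorWeight hκ _)))

theorem primeFactorWeight_prod_le_sum {κ : ℝ} (hκ : 0 ≤ κ) {α : Type*} {s : Finset α}
    (hs : s.Nonempty) (f : α → ℕ) :
    primeFactorWeight κ (∏ i ∈ s, f i) ≤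
      ∑ i ∈ s, primeFactorWeight ((1 + κ) ^ s.card - 1) (f i) := by
  obtain ⟨j, hj, hmax⟩ := s.exists_max_image (fun i ↦ primeFactorWeight κ (f i)) hs
  have weight_nonneg (μ : ℝ) (hμ : 0 ≤ μ) (n : ℕ) : 0 ≤ primeFactorWeight μ n :=
    zero_le_one.trans (one_le_primeFactorWeight hμ n)
  calc primeFactorWeight κ (∏ i ∈ s, f i)
      ≤ ∏ i ∈ s, primeFactorWeight κ (f i) := primeFactorWeight_prod_le hκ s f
    _ ≤ primeFactorWeight κ (f j) ^ s.card := by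
        rw [← Finset.prod_const]
        exact Finset.prod_le_prod (fun i _ ↦ weight_nonneg κ hκ _) hmax
    _ ≤ primeFactorWeight ((1 + κ) ^ s.card - 1) (f j) := primeFactorWeight_pow_le hκ _ _
    _ ≤ _ := Finset.single_le_sum (fun i _ ↦ weight_nonneg _
        (sub_nonneg.2 (one_le_pow₀ (le_add_of_nonneg_right hκ))) (f i)) hj

variable {ι : Type*}

/-- A multiple of all primes at which the sieve can degenerate: those dividing a coordinate, or the
distance between two products which are not separated by resampling. -/
def exceptionalModulus [Fintype ι] (T : Finset (Finset ι × Finset ι)) (x : ι → ℕ) : ℕ :=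
  (∏ v, x v) * ∏ t ∈ T, productDistance t.1 t.2 x

theorem exceptionalModulus_ne_zero [Fintype ι] {T : Finset (Finset ι × Finset ι)} {x : ι → ℕ}
    (hx : ∀ v, 0 < x v) (hT : ∀ t ∈ T, CoprimeProducts t.1 t.2 x) :
    exceptionalModulus T x ≠ 0 := by
  refine mul_ne_zero (Finset.prod_ne_zero_iff.2 fun v _ ↦ (hx v).ne')
    (Finset.prod_ne_zero_iff.2 fun t ht h ↦ (hT t ht).2 ?_)
  exact Int.natCast_inj.1 (sub_eq_zero.1 (Int.natAbs_eq_zero.1 h))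

variable [DecidableEq ι]

/-- A tuple is admissible for the index sets `M` if its products over the `M i` are shifted primes
and, for all `i ≠ j`, its products over `M i \ M j` and `M j \ M i` are coprime and distinct. -/
def IsAdmissible (M : Fin 3 → Finset ι) (x : ι → ℕ) : Prop :=
  (∀ i, (∏ v ∈ M i, x v + 1).Prime) ∧ ∀ i j, i ≠ j → CoprimeProducts (M i \ M j) (M j \ M i) x

instance (M : Fin 3 → Finset ι) : DecidablePred (IsAdmissible M) :=
  fun _ ↦ inferInstanceAs (Decidable (_ ∧ _))

/-- The pairs `(M i \ M j, M j \ M i)` for which `M i` and `M j` cut out the same part of `σ`. -/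
def unseparatedPairs (M : Fin 3 → Finset ι) (σ : Finset ι) : Finset (Finset ι × Finset ι) :=
  (Finset.univ.filter fun t : Fin 3 × Fin 3 ↦ t.1 ≠ t.2 ∧ M t.1 ∩ σ = M t.2 ∩ σ).image
    fun t ↦ (M t.1 \ M t.2, M t.2 \ M t.1)

theorem mem_unseparatedPairs {M : Fin 3 → Finset ι} {σ : Finset ι} {t : Finset ι × Finset ι} :
    t ∈ unseparatedPairs M σ ↔
      ∃ i j, i ≠ j ∧ M i ∩ σ = M j ∩ σ ∧ (M i \ M j, M j \ M i) = t := by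
  simp only [unseparatedPairs, Finset.mem_image, Finset.mem_filter_univ, Prod.exists, and_assoc]

theorem disjoint_sdiff_of_inter_eq {A B σ : Finset ι} (h : A ∩ σ = B ∩ σ) :
    Disjoint (A \ B) σ :=
  Finset.disjoint_left.2 fun _v hv hvσ ↦ (Finset.mem_sdiff.1 hv).2
    (Finset.mem_inter.1 (h ▸ Finset.mem_inter.2 ⟨(Finset.mem_sdiff.1 hv).1, hvσ⟩)).1

theorem prod_sdiff_eq_mul_prod_sdiff {A B σ : Finset ι} (h : A ∩ σ = B ∩ σ) (x : ι → ℕ) :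
    ∏ v ∈ A \ σ, x v = (∏ v ∈ (A ∩ B) \ σ, x v) * ∏ v ∈ A \ B, x v := by
  have hdisj := disjoint_sdiff_of_inter_eq h
  rw [← Finset.prod_inter_mul_prod_sdiff (A \ σ) B, Finset.sdiff_inter_right_comm,
    sdiff_sdiff_comm, hdisj.sdiff_eq_left]

theorem coprimeProducts_piecewise {A B σ : Finset ι} (hA : Disjoint A σ) (hB : Disjoint B σ)
    (x y : ι → ℕ) : CoprimeProducts A B (σ.piecewise y x) ↔ CoprimeProducts A B x := by
  have prod_piecewise {D : Finset ι} (hD : Disjoint D σ) :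
      ∏ v ∈ D, σ.piecewise y x v = ∏ v ∈ D, x v :=
    Finset.prod_congr rfl fun v hv ↦
      Finset.piecewise_eq_of_notMem _ _ _ (Finset.disjoint_left.1 hD hv)
  rw [CoprimeProducts, CoprimeProducts, prod_piecewise hA, prod_piecewise hB]

variable [Fintype ι]

theorem exists_sum_filter_primeFactorWeight_exceptionalModulus_le [Nonempty ι] {κ : ℝ}
    (hκ : 0 ≤ κ) {T : Finset (Finset ι × Finset ι)}
    (hT : ∀ t ∈ T, Disjoint t.1 t.2 ∧ t.1.card = 2 ∧ t.2.card = 2) :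
    ∃ C : ℝ, 0 < C ∧ ∀ N : ι → ℕ, (∀ v, 0 < N v) →
      ∑ x ∈ (dyadicBox N).filter (fun x ↦ ∀ t ∈ T, CoprimeProducts t.1 t.2 x),
        primeFactorWeight κ (exceptionalModulus T x) ≤ C * ∏ v, (N v : ℝ) := by
  set S := (Finset.univ : Finset ι).disjSum T
  set μ := (1 + κ) ^ S.card - 1
  have hμ : 0 ≤ μ := sub_nonneg.2 (one_le_pow₀ (le_add_of_nonneg_right hκ))
  have weight_nonneg (n : ℕ) : 0 ≤ primeFactorWeight μ n :=
    zero_le_one.trans (one_le_primeFactorWeight hμ n)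
  obtain ⟨C, hC, coordinate_le⟩ := exists_sum_dyadicBox_primeFactorWeight_apply_le (ι := ι) hμ
  obtain ⟨D, hD, distance_le⟩ :=
    exists_sum_filter_primeFactorWeight_productDistance_le (ι := ι) hμ
  refine ⟨Fintype.card ι * C + T.card * D, by positivity, fun N hN ↦ ?_⟩
  set F := (dyadicBox N).filter fun x ↦ ∀ t ∈ T, CoprimeProducts t.1 t.2 x
  have weight_le (x : ι → ℕ) : primeFactorWeight κ (exceptionalModulus T x) ≤
      ∑ v, primeFactorWeight μ (x v) +
        ∑ t ∈ T, primeFactorWeight μ (productDistance t.1 t.2 x) := by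
    have := primeFactorWeight_prod_le_sum hκ (s := S)
      ⟨Sum.inl (Classical.arbitrary ι), Finset.inl_mem_disjSum.2 (Finset.mem_univ _)⟩
      (Sum.elim x fun t ↦ productDistance t.1 t.2 x)
    rwa [Finset.prod_disjSum, Finset.sum_disjSum] at this
  calc ∑ x ∈ F, primeFactorWeight κ (exceptionalModulus T x)
      ≤ ∑ v, ∑ x ∈ F, primeFactorWeight μ (x v) +
          ∑ t ∈ T, ∑ x ∈ F, primeFactorWeight μ (productDistance t.1 t.2 x) := by
        rw [Finset.sum_comm, Finset.sum_comm (s := T), ← Finset.sum_add_distrib]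
        exact Finset.sum_le_sum fun x _ ↦ weight_le x
    _ ≤ ∑ _v : ι, C * ∏ v, (N v : ℝ) + ∑ _t ∈ T, D * ∏ v, (N v : ℝ) := by
        refine add_le_add (Finset.sum_le_sum fun v _ ↦ ?_) (Finset.sum_le_sum fun t ht ↦ ?_)
        · exact (Finset.sum_le_sum_of_subset_of_nonneg (Finset.filter_subset _ _)
            fun x _ _ ↦ weight_nonneg _).trans (coordinate_le N v (hN v))
        · obtain ⟨hdisj, hA, hB⟩ := hT t ht
          exact (Finset.sum_le_sum_of_subset_of_nonneg
            (Finset.monotone_filter_right _ fun x _ hx ↦ hx t ht)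
            fun x _ _ ↦ weight_nonneg _).trans (distance_le N t.1 t.2 hN hdisj hA hB)
    _ = _ := by
        rw [Finset.sum_const, Finset.sum_const, Finset.card_univ, nsmul_eq_mul, nsmul_eq_mul]
        ring

theorem not_modEq_of_not_dvd_exceptionalModulus {M : Fin 3 → Finset ι} {σ : Finset ι} {x : ι → ℕ}
    {p : ℕ} (hp : p.Prime) (hpE : ¬p ∣ exceptionalModulus (unseparatedPairs M σ) x) :
    (∀ i, ¬p ∣ ∏ v ∈ M i \ σ, x v) ∧ ∀ i j, i ≠ j → M i ∩ σ = M j ∩ σ →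
      ¬ ∏ v ∈ M i \ σ, x v ≡ ∏ v ∈ M j \ σ, x v [MOD p] := by
  have not_dvd_prod (A : Finset ι) : ¬p ∣ ∏ v ∈ A, x v := fun h ↦ hpE <|
    (h.trans (Finset.prod_dvd_prod_of_subset _ _ _ (Finset.subset_univ A))).mul_right _
  refine ⟨fun i ↦ not_dvd_prod _, fun i j hij hσ hmod ↦ ?_⟩
  rw [prod_sdiff_eq_mul_prod_sdiff hσ, prod_sdiff_eq_mul_prod_sdiff hσ.symm,
    Finset.inter_comm (M j)] at hmod
  have hcoprime := ((Nat.Prime.coprime_iff_not_dvd hp).2 (not_dvd_prod ((M i ∩ M j) \ σ)))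
  have hdvd : p ∣ productDistance (M j \ M i) (M i \ M j) x :=
    Int.natCast_dvd.1 (Nat.modEq_iff_dvd.1 (Nat.ModEq.cancel_left_of_coprime hcoprime hmod))
  rw [productDistance_comm] at hdvd
  have hmem := mem_unseparatedPairs.2 ⟨i, j, hij, hσ, rfl⟩
  have hprod := Finset.dvd_prod_of_mem (fun t ↦ productDistance t.1 t.2 x) hmem
  exact hpE ((hdvd.trans hprod).mul_left _)

theorem sum_dyadicBox_piecewise {N N' : ι → ℕ} {σ : Finset ι} (h : ∀ v ∈ σ, N v = N' v)
    (f : (ι → ℕ) → ℝ) :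
    ∑ x ∈ dyadicBox N, ∑ y ∈ dyadicBox N', f (σ.piecewise y x) =
      (∏ v, (N' v : ℝ)) * ∑ x ∈ dyadicBox N, f x := by
  have := sum_piFinset_piecewise (s := fun v ↦ Finset.Ico (N v) (2 * N v))
    (t := fun v ↦ Finset.Ico (N' v) (2 * N' v)) (fun v hv ↦ by rw [h v hv]) f
  rwa [← dyadicBox, ← dyadicBox, card_dyadicBox, nsmul_eq_mul, Nat.cast_prod] at this

theorem exists_card_filter_isAdmissible_piecewise_le {M : Fin 3 → Finset ι} {σ : Finset ι}
    (hσ : ∀ i, (M i ∩ σ).Nonempty) (hσ4 : ∑ i, (M i ∩ σ).card ≤ 4) :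
    ∃ C : ℝ, 0 < C ∧ ∀ (x N : ι → ℕ) (m : ℕ), (∀ v, 0 < x v) → (∀ v, 2 ^ m ≤ N v) →
      (((dyadicBox N).filter fun y ↦ IsAdmissible M (σ.piecewise y x)).card : ℝ) ≤
        (∏ v, (N v : ℝ)) * (C / (m + 1) ^ 3 *
          if ∀ t ∈ unseparatedPairs M σ, CoprimeProducts t.1 t.2 x then
            primeFactorWeight 3 (exceptionalModulus (unseparatedPairs M σ) x) else 0) := by
  obtain ⟨C, hC, sieve⟩ := exists_card_filter_forall_prime_le ι
  refine ⟨C, hC, fun x N m hx hN ↦ ?_⟩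
  split_ifs with hT
  · have hsub : (dyadicBox N).filter (fun y ↦ IsAdmissible M (σ.piecewise y x)) ⊆
        (dyadicBox N).filter
          fun y ↦ ∀ i, ((∏ v ∈ M i \ σ, x v) * ∏ v ∈ M i ∩ σ, y v + 1).Prime := by
      refine Finset.monotone_filter_right _ fun y _ hy i ↦ ?_
      simpa only [Finset.prod_piecewise, mul_comm] using hy.1 i
    have hbound := sieve (fun i ↦ ∏ v ∈ M i \ σ, x v) (fun i ↦ M i ∩ σ) N m _
      (exceptionalModulus_ne_zero hx hT) hσ hσ4 hN
      fun p hp hpE ↦ not_modEq_of_not_dvd_exceptionalModulus hp hpE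
    exact (Nat.cast_le.2 (Finset.card_le_card hsub)).trans (hbound.trans_eq (by ring))
  · rw [Finset.card_eq_zero.2, Nat.cast_zero, mul_zero, mul_zero]
    refine Finset.filter_eq_empty_iff.2 fun y _ hy ↦ hT fun t ht ↦ ?_
    obtain ⟨i, j, hij, hinter, rfl⟩ := mem_unseparatedPairs.1 ht
    exact (coprimeProducts_piecewise (disjoint_sdiff_of_inter_eq hinter)
      (disjoint_sdiff_of_inter_eq hinter.symm) x y).1 (hy.2 i j hij)

theorem exists_card_filter_isAdmissible_le [Nonempty ι] {M : Fin 3 → Finset ι}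
    (hM : ∀ i j, i ≠ j → (M i \ M j).card = 2) {σ : Finset ι} (hσ : ∀ i, (M i ∩ σ).Nonempty)
    (hσ4 : ∑ i, (M i ∩ σ).card ≤ 4) :
    ∃ C : ℝ, 0 < C ∧ ∀ (N : ι → ℕ) (m : ℕ), (∀ v, 0 < N v) → (∀ v ∈ σ, 2 ^ m ≤ N v) →
      (((dyadicBox N).filter (IsAdmissible M)).card : ℝ) ≤ C * (∏ v, (N v : ℝ)) / (m + 1) ^ 3 := by
  obtain ⟨C, hC, fiber_le⟩ := exists_card_filter_isAdmissible_piecewise_le hσ hσ4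
  obtain ⟨D, hD, average⟩ := exists_sum_filter_primeFactorWeight_exceptionalModulus_le
    (κ := 3) zero_le_three (T := unseparatedPairs M σ) fun t ht ↦ by
      obtain ⟨i, j, hij, -, rfl⟩ := mem_unseparatedPairs.1 ht
      exact ⟨disjoint_sdiff_sdiff, hM i j hij, hM j i hij.symm⟩
  refine ⟨C * D, mul_pos hC hD, fun N m hN hm ↦ ?_⟩
  set N' : ι → ℕ := σ.piecewise N fun _ ↦ 2 ^ m
  have hN' (v : ι) : 2 ^ m ≤ N' v := by
    by_cases hv : v ∈ σ
    · simpa only [N', Finset.piecewise_eq_of_mem _ _ _ hv] using hm v hv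
    · simp only [N', Finset.piecewise_eq_of_notMem _ _ _ hv, le_refl]
  have hprod : (0 : ℝ) < ∏ v, (N' v : ℝ) :=
    Finset.prod_pos fun v _ ↦ Nat.cast_pos.2 ((Nat.two_pow_pos m).trans_le (hN' v))
  have resample := sum_dyadicBox_piecewise (N := N) (N' := N') (σ := σ)
    (fun v hv ↦ (Finset.piecewise_eq_of_mem _ _ _ hv).symm)
    fun x ↦ if IsAdmissible M x then 1 else 0
  simp only [Finset.sum_boole] at resample
  refine le_of_mul_le_mul_left (resample.symm.trans_le ?_) hprod
  calc _ ≤ _ := Finset.sum_le_sum fun x hx ↦ fiber_le x N' m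
          (fun v ↦ (hN v).trans_le (mem_dyadicBox.1 hx v).1) hN'
    _ = (∏ v, (N' v : ℝ)) * (C / (m + 1) ^ 3 * ∑ x ∈ (dyadicBox N).filter
          (fun x ↦ ∀ t ∈ unseparatedPairs M σ, CoprimeProducts t.1 t.2 x),
            primeFactorWeight 3 (exceptionalModulus (unseparatedPairs M σ) x)) := by
        rw [← Finset.mul_sum, ← Finset.mul_sum, ← Finset.sum_filter]
    _ ≤ (∏ v, (N' v : ℝ)) * (C / (m + 1) ^ 3 * (D * ∏ v, (N v : ℝ))) := by
        gcongr
        exact average N hN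
    _ = _ := by ring

end AdmissibleTuples

section DyadicExponents

variable {ι : Type*} [DecidableEq ι]

/-- The weight `(j s + 1) ^ (-(#M - 1))` of the tuples `j` whose maximum over `M` is attained at
`s`. -/
noncomputable def peakWeight (M : Finset ι) (s : ι) (j : ι → ℕ) : ℝ :=
  if ∀ v ∈ M, j v ≤ j s then 1 / ((j s : ℝ) + 1) ^ (M.erase s).card else 0

theorem peakWeight_nonneg (M : Finset ι) (s : ι) (j : ι → ℕ) : 0 ≤ peakWeight M s j := by
  unfold peakWeight
  positivity

/-- The factor at the coordinate `v` of the indicator that `s` is a maximum over `M` with value `b`,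
normalised to have total mass `1` at each `v ∈ M`. -/
noncomputable def peakFactor (M : Finset ι) (s : ι) (b : ℕ) (v : ι) (a : ℕ) : ℝ :=
  if v = s then (if a = b then 1 else 0)
  else if v ∈ M then (if a ≤ b then 1 / ((b : ℝ) + 1) else 0) else 1

theorem sum_peakFactor {M : Finset ι} {s : ι} (hs : s ∈ M) {n b : ℕ}
    (hb : b ∈ Finset.range (n + 1)) (v : ι) :
    ∑ a ∈ Finset.range (n + 1), peakFactor M s b v a = if v ∈ M then 1 else (n + 1 : ℝ) := by
  rcases eq_or_ne v s with rfl | hv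
  · simp only [peakFactor, if_true, if_pos hs, Finset.sum_ite_eq', if_pos hb]
  by_cases hvM : v ∈ M
  · have hfilter : (Finset.range (n + 1)).filter (· ≤ b) = Finset.range (b + 1) := by
      grind
    simp only [peakFactor, if_neg hv, if_pos hvM, ← Finset.sum_filter, hfilter, Finset.sum_const,
      Finset.card_range, nsmul_eq_mul, Nat.cast_succ]
    exact mul_one_div_cancel b.cast_add_one_ne_zero
  · simp only [peakFactor, if_neg hv, if_neg hvM, Finset.sum_const, Finset.card_range,
      nsmul_eq_mul, Nat.cast_succ, mul_one]

variable [Fintype ι]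

variable (ι) in
/-- The tuples of exponents at most `n`, indexing the dyadic boxes `dyadicBox (2 ^ j ·)`. -/
def exponentBox (n : ℕ) : Finset (ι → ℕ) :=
  Fintype.piFinset fun _ ↦ Finset.range (n + 1)

theorem mem_exponentBox {n : ℕ} {j : ι → ℕ} : j ∈ exponentBox ι n ↔ ∀ v, j v ≤ n := by
  simp only [exponentBox, Fintype.mem_piFinset, Finset.mem_range, Nat.lt_succ_iff]

theorem peakWeight_le_sum_prod_peakFactor (M : Finset ι) (s : ι) {n : ℕ} {j : ι → ℕ}
    (hj : j ∈ exponentBox ι n) :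
    peakWeight M s j ≤ ∑ b ∈ Finset.range (n + 1), ∏ v, peakFactor M s b v (j v) := by
  have prod_nonneg (b) : 0 ≤ ∏ v, peakFactor M s b v (j v) :=
    Finset.prod_nonneg fun v _ ↦ by unfold peakFactor; positivity
  unfold peakWeight
  split_ifs with hpeak
  · have factor_eq (v : ι) :
        peakFactor M s (j s) v (j v) = if v ∈ M.erase s then 1 / ((j s : ℝ) + 1) else 1 := by
      grind [peakFactor]
    have hprod : ∏ v, peakFactor M s (j s) v (j v) = 1 / ((j s : ℝ) + 1) ^ (M.erase s).card := by
      simp only [factor_eq, Finset.prod_ite_mem, Finset.univ_inter, Finset.prod_const,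
        one_div_pow]
    rw [← hprod]
    exact Finset.single_le_sum (f := fun b ↦ ∏ v, peakFactor M s b v (j v))
      (fun b _ ↦ prod_nonneg b) (Finset.mem_range_succ_iff.2 (mem_exponentBox.1 hj s))
  · exact Finset.sum_nonneg fun b _ ↦ prod_nonneg b

theorem sum_peakWeight_le {M : Finset ι} {s : ι} (hs : s ∈ M) (n : ℕ) :
    ∑ j ∈ exponentBox ι n, peakWeight M s j ≤ (n + 1 : ℝ) ^ (Mᶜ.card + 1) := by
  calc ∑ j ∈ exponentBox ι n, peakWeight M s j
      ≤ ∑ b ∈ Finset.range (n + 1), ∑ j ∈ exponentBox ι n, ∏ v, peakFactor M s b v (j v) := by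
        rw [Finset.sum_comm]
        exact Finset.sum_le_sum fun j hj ↦ peakWeight_le_sum_prod_peakFactor M s hj
    _ = ∑ b ∈ Finset.range (n + 1), ∏ v, if v ∈ M then 1 else (n + 1 : ℝ) :=
        Finset.sum_congr rfl fun b hb ↦ by
          simp only [exponentBox, ← Finset.prod_univ_sum, sum_peakFactor hs hb]
    _ = (n + 1 : ℝ) ^ (Mᶜ.card + 1) := by
        rw [Finset.prod_ite, Finset.prod_const_one, one_mul, Finset.prod_const,
          Finset.filter_notMem_eq_sdiff, ← Finset.compl_eq_univ_sdiff, Finset.sum_const,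
          Finset.card_range, nsmul_eq_mul, Nat.cast_succ, pow_succ']

theorem sum_range_filter_two_pow_le (n k : ℕ) :
    ∑ a ∈ (Finset.range (n + 1)).filter (k + · ≤ n), (2 : ℝ) ^ (k + a) ≤ 2 ^ (n + 1) := by
  calc ∑ a ∈ (Finset.range (n + 1)).filter (k + · ≤ n), (2 : ℝ) ^ (k + a)
      ≤ ∑ c ∈ Finset.range (n + 1), (2 : ℝ) ^ c :=
        sum_le_sum_of_injOn (k + ·)
          (fun a ha ↦ Finset.mem_range_succ_iff.2 (Finset.mem_filter.1 ha).2)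
          (fun _ _ _ _ h ↦ Nat.add_left_cancel h) (fun _ _ ↦ le_rfl) fun _ _ ↦ by positivity
    _ ≤ 2 ^ (n + 1) := by
        rw [geom_sum_eq (by norm_num)]
        norm_num

theorem sum_two_pow_mul_peakWeight_le {M : Finset ι} {r s : ι} (hr : r ∉ M) (hs : s ∈ M) (n : ℕ) :
    ∑ j ∈ (exponentBox ι n).filter (fun j ↦ ∑ v, j v ≤ n), 2 ^ (∑ v, j v) * peakWeight M s j ≤
      2 ^ (n + 1) * (n + 1 : ℝ) ^ Mᶜ.card := by
  have peakWeight_update (j : ι → ℕ) (a : ℕ) :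
      peakWeight M s (Function.update j r a) = peakWeight M s j := by
    have update_eq (v) (hv : v ∈ M) : Function.update j r a v = j v :=
      Function.update_of_ne (ne_of_mem_of_not_mem hv hr) a j
    unfold peakWeight
    rw [update_eq s hs]
    congr 1
    exact propext (forall₂_congr fun v hv ↦ by rw [update_eq v hv])
  have sum_update (j : ι → ℕ) (a : ℕ) :
      ∑ v, Function.update j r a v = ∑ v ∈ Finset.univ \ {r}, j v + a := by
    rw [Finset.sum_update_of_mem (Finset.mem_univ r), add_comm]
  have resample := sum_piFinset_update (fun _ : ι ↦ Finset.range (n + 1)) r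
    fun j ↦ (if ∑ v, j v ≤ n then (2 : ℝ) ^ (∑ v, j v) else 0) * peakWeight M s j
  simp only [peakWeight_update, sum_update, Finset.card_range, nsmul_eq_mul, Nat.cast_succ,
    ← Finset.sum_mul] at resample
  rw [Finset.sum_filter]
  simp only [ite_mul, zero_mul] at resample ⊢
  refine le_of_mul_le_mul_left (resample.symm.trans_le ?_) n.cast_add_one_pos
  calc _ ≤ ∑ j ∈ exponentBox ι n, 2 ^ (n + 1) * peakWeight M s j :=
        Finset.sum_le_sum fun j _ ↦ mul_le_mul_of_nonneg_right
          ((Finset.sum_filter _ _).symm.trans_le (sum_range_filter_two_pow_le n _))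
          (peakWeight_nonneg M s j)
    _ ≤ 2 ^ (n + 1) * (n + 1 : ℝ) ^ (Mᶜ.card + 1) := by
        rw [← Finset.mul_sum]
        gcongr
        exact sum_peakWeight_le hs n
    _ = _ := by ring

theorem card_le_sum_card_dyadicBox {P : (ι → ℕ) → Prop} [DecidablePred P] {X : ℕ}
    {S : Finset (ι → ℕ)} (hS : ∀ x ∈ S, P x ∧ (∀ v, 0 < x v) ∧ ∏ v, x v ≤ X) :
    S.card ≤ ∑ j ∈ (exponentBox ι (Nat.log 2 X)).filter (fun j ↦ ∑ v, j v ≤ Nat.log 2 X),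
      ((dyadicBox fun v ↦ 2 ^ j v).filter P).card := by
  set n := Nat.log 2 X
  have sum_log_le (x) (hx : x ∈ S) : ∑ v, Nat.log 2 (x v) ≤ n := by
    obtain ⟨-, hpos, hprod⟩ := hS x hx
    refine Nat.le_log_of_pow_le one_lt_two (le_trans ?_ hprod)
    rw [← Finset.prod_pow_eq_pow_sum]
    exact Finset.prod_le_prod' fun v _ ↦ Nat.pow_log_le_self 2 (hpos v).ne'
  have maps_to (x) (hx : x ∈ S) :
      (fun v ↦ Nat.log 2 (x v)) ∈ (exponentBox ι n).filter (fun j ↦ ∑ v, j v ≤ n) :=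
    Finset.mem_filter.2 ⟨mem_exponentBox.2 fun v ↦ (Finset.single_le_sum
      (f := fun v ↦ Nat.log 2 (x v)) (fun _ _ ↦ Nat.zero_le _) (Finset.mem_univ v)).trans
        (sum_log_le x hx), sum_log_le x hx⟩
  rw [Finset.card_eq_sum_card_fiberwise maps_to]
  refine Finset.sum_le_sum fun j _ ↦ Finset.card_le_card fun x hx ↦ ?_
  obtain ⟨hxS, rfl⟩ := Finset.mem_filter.1 hx
  obtain ⟨hP, hpos, -⟩ := hS x hxS
  refine Finset.mem_filter.2 ⟨mem_dyadicBox.2 fun v ↦ ⟨Nat.pow_log_le_self 2 (hpos v).ne', ?_⟩, hP⟩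
  rw [← pow_succ']
  exact Nat.lt_pow_succ_log_self one_lt_two _

end DyadicExponents

/-- The nonempty subsets of `Fin 3`: the possible sets of indices `i` such that the shifted prime
`p i - 1` is divisible by a given prime power. -/
abbrev Pattern := {S : Finset (Fin 3) // S.Nonempty}

namespace Pattern

/-- The patterns containing the index `i`. -/
def containing (i : Fin 3) : Finset Pattern := Finset.univ.filter (i ∈ ·.1)

theorem mem_containing {i : Fin 3} {S : Pattern} : S ∈ containing i ↔ i ∈ S.1 :=
  Finset.mem_filter_univ S

theorem card_containing (i : Fin 3) : (containing i).card = 4 := by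
  revert i
  decide

theorem card_compl_containing (i : Fin 3) : (containing i)ᶜ.card = 3 := by
  revert i
  decide

theorem card_containing_sdiff_containing (i j : Fin 3) (hij : i ≠ j) :
    (containing i \ containing j).card = 2 := by
  revert i j
  decide

instance : Nonempty Pattern := ⟨⟨{0}, Finset.singleton_nonempty 0⟩⟩

-- A largest `S ∈ L` together with one member of `L` for each index it misses covers each index, of
-- total size at most `#S + (3 - #S) * #S ≤ 4`.
theorem exists_subset_cover_sum_card_le_four {L : Finset Pattern}
    (hL : ∀ i, ∃ S ∈ containing i, S ∈ L) :
    ∃ σ ⊆ L, (∀ i, (containing i ∩ σ).Nonempty) ∧ ∑ i, (containing i ∩ σ).card ≤ 4 := by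
  choose t htmem htL using hL
  obtain ⟨S, hSL, hmax⟩ := L.exists_max_image (fun S ↦ S.1.card) ⟨t 0, htL 0⟩
  set σ := insert S (S.1ᶜ.image t)
  have hσL : σ ⊆ L := Finset.insert_subset hSL (Finset.image_subset_iff.2 fun i _ ↦ htL i)
  refine ⟨σ, hσL, fun i ↦ ?_, ?_⟩
  · by_cases hi : i ∈ S.1
    · exact ⟨S, Finset.mem_inter.2 ⟨mem_containing.2 hi, Finset.mem_insert_self _ _⟩⟩
    · exact ⟨t i, Finset.mem_inter.2 ⟨htmem i, Finset.mem_insert_of_mem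
        (Finset.mem_image_of_mem t (Finset.mem_compl.2 hi))⟩⟩
  · have hcompl : S.1ᶜ.card = 3 - S.1.card := by rw [Finset.card_compl, Fintype.card_fin]
    have hS : S.1.card ≤ 3 := card_finset_fin_le S.1
    calc ∑ i, (containing i ∩ σ).card = ∑ T ∈ σ, T.1.card := by
          have := Finset.sum_card_bipartiteAbove_eq_sum_card_bipartiteBelow
            (s := (Finset.univ : Finset (Fin 3))) (t := σ) fun i T ↦ i ∈ T.1
          simpa only [Finset.bipartiteAbove, Finset.bipartiteBelow, containing,
            Finset.filter_inter, Finset.univ_inter, Finset.filter_univ_mem] using this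
      _ ≤ ∑ _T ∈ insert S (S.1ᶜ.image t), S.1.card := Finset.sum_le_sum fun T hT ↦ hmax T (hσL hT)
      _ ≤ (1 + (3 - S.1.card)) * S.1.card := by
          rw [Finset.sum_const, smul_eq_mul, ← hcompl, add_comm]
          gcongr
          exact (Finset.card_insert_le _ _).trans (Nat.succ_le_succ Finset.card_image_le)
      _ ≤ 4 := by
          interval_cases S.1.card <;> norm_num

theorem exists_card_filter_isAdmissible_containing_le :
    ∃ C : ℝ, 0 < C ∧ ∀ (N : Pattern → ℕ) (m : ℕ), (∀ S, 0 < N S) →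
      (∀ i, ∃ S ∈ containing i, 2 ^ m ≤ N S) →
      (((dyadicBox N).filter (IsAdmissible containing)).card : ℝ) ≤
        C * (∏ S, (N S : ℝ)) / (m + 1) ^ 3 := by
  have bound (σ : Finset Pattern) : ∃ C : ℝ, 0 < C ∧ ((∀ i, (containing i ∩ σ).Nonempty) →
      ∑ i, (containing i ∩ σ).card ≤ 4 → ∀ (N : Pattern → ℕ) (m : ℕ), (∀ S, 0 < N S) →
      (∀ S ∈ σ, 2 ^ m ≤ N S) → (((dyadicBox N).filter (IsAdmissible containing)).card : ℝ) ≤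
        C * (∏ S, (N S : ℝ)) / (m + 1) ^ 3) := by
    by_cases h : (∀ i, (containing i ∩ σ).Nonempty) ∧ ∑ i, (containing i ∩ σ).card ≤ 4
    · obtain ⟨C, hC, hle⟩ :=
        exists_card_filter_isAdmissible_le card_containing_sdiff_containing h.1 h.2
      exact ⟨C, hC, fun _ _ ↦ hle⟩
    · exact ⟨1, one_pos, fun h1 h2 ↦ (h ⟨h1, h2⟩).elim⟩
  choose C hC hle using bound
  refine ⟨∑ σ, C σ, Finset.sum_pos (fun σ _ ↦ hC σ) Finset.univ_nonempty, fun N m hN hm ↦ ?_⟩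
  obtain ⟨σ, hσ, hcover, hcard⟩ := exists_subset_cover_sum_card_le_four
    (L := Finset.univ.filter (2 ^ m ≤ N ·)) fun i ↦ by simpa using hm i
  refine (hle σ hcover hcard N m hN fun S hS ↦ (Finset.mem_filter.1 (hσ hS)).2).trans ?_
  gcongr
  exact Finset.single_le_sum (fun τ _ ↦ (hC τ).le) (Finset.mem_univ σ)

theorem exists_card_dyadicBox_two_pow_le :
    ∃ C : ℝ, 0 < C ∧ ∀ j : Pattern → ℕ,
      (((dyadicBox fun S ↦ 2 ^ j S).filter (IsAdmissible containing)).card : ℝ) ≤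
        C * ∑ i, ∑ S ∈ containing i, 2 ^ (∑ T, j T) * peakWeight (containing i) S j := by
  obtain ⟨C, hC, card_le⟩ := exists_card_filter_isAdmissible_containing_le
  refine ⟨C, hC, fun j ↦ ?_⟩
  have containing_nonempty (i : Fin 3) : (containing i).Nonempty :=
    Finset.card_pos.1 (card_containing i ▸ four_pos)
  choose peak peak_mem hpeak using fun i ↦ (containing i).exists_max_image j (containing_nonempty i)
  obtain ⟨i, -, hmin⟩ := (Finset.univ : Finset (Fin 3)).exists_min_image (fun i ↦ j (peak i))
    Finset.univ_nonempty
  have hcard : ((containing i).erase (peak i)).card = 3 := by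
    rw [Finset.card_erase_of_mem (peak_mem i), card_containing]
  have term_nonneg (k : Fin 3) (S : Pattern) :
      0 ≤ 2 ^ (∑ T, j T) * peakWeight (containing k) S j :=
    mul_nonneg (by positivity) (peakWeight_nonneg _ _ _)
  calc (((dyadicBox fun S ↦ 2 ^ j S).filter (IsAdmissible containing)).card : ℝ)
      ≤ C * (∏ S, ((2 ^ j S : ℕ) : ℝ)) / (j (peak i) + 1) ^ 3 :=
        card_le _ _ (fun S ↦ Nat.two_pow_pos _) fun k ↦
          ⟨peak k, peak_mem k, Nat.pow_le_pow_right two_pos (hmin k (Finset.mem_univ k))⟩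
    _ = C * (2 ^ (∑ T, j T) * peakWeight (containing i) (peak i) j) := by
        rw [peakWeight, if_pos (hpeak i), hcard, ← Finset.prod_pow_eq_pow_sum]
        push_cast
        ring
    _ ≤ C * ∑ S ∈ containing i, 2 ^ (∑ T, j T) * peakWeight (containing i) S j := by
        gcongr
        exact Finset.single_le_sum (f := fun S ↦ 2 ^ (∑ T, j T) * peakWeight (containing i) S j)
          (fun S _ ↦ term_nonneg i S) (peak_mem i)
    _ ≤ _ := by
        gcongr
        exact Finset.single_le_sum
          (f := fun k ↦ ∑ S ∈ containing k, 2 ^ (∑ T, j T) * peakWeight (containing k) S j)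
          (fun k _ ↦ Finset.sum_nonneg fun S _ ↦ term_nonneg k S) (Finset.mem_univ i)

theorem exists_card_isAdmissible_le :
    ∃ C : ℝ, 0 < C ∧ ∀ (X : ℕ) (S : Finset (Pattern → ℕ)),
      (∀ e ∈ S, IsAdmissible containing e ∧ (∀ T, 0 < e T) ∧ ∏ T, e T ≤ X) →
      (S.card : ℝ) ≤ C * 2 ^ Nat.log 2 X * (Nat.log 2 X + 1) ^ 3 := by
  obtain ⟨C, hC, box_le⟩ := exists_card_dyadicBox_two_pow_le
  refine ⟨C * 24, by positivity, fun X S hS ↦ ?_⟩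
  set n := Nat.log 2 X
  set J := (exponentBox Pattern n).filter fun j ↦ ∑ T, j T ≤ n
  have exists_notMem (i : Fin 3) : ∃ R, R ∉ containing i := by
    obtain ⟨R, hR⟩ := Finset.card_pos.1 (card_compl_containing i ▸ three_pos)
    exact ⟨R, Finset.mem_compl.1 hR⟩
  have peak_le (i : Fin 3) (T) (hT : T ∈ containing i) :
      ∑ j ∈ J, 2 ^ (∑ R, j R) * peakWeight (containing i) T j ≤ 2 ^ (n + 1) * (n + 1 : ℝ) ^ 3 := by
    obtain ⟨R, hR⟩ := exists_notMem i
    have := sum_two_pow_mul_peakWeight_le hR hT n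
    rwa [card_compl_containing] at this
  calc (S.card : ℝ)
      ≤ ∑ j ∈ J, (((dyadicBox fun T ↦ 2 ^ j T).filter (IsAdmissible containing)).card : ℝ) :=
        mod_cast card_le_sum_card_dyadicBox hS
    _ ≤ ∑ j ∈ J, C * ∑ i, ∑ T ∈ containing i,
          2 ^ (∑ R, j R) * peakWeight (containing i) T j := Finset.sum_le_sum fun j _ ↦ box_le j
    _ = C * ∑ i, ∑ T ∈ containing i, ∑ j ∈ J, 2 ^ (∑ R, j R) * peakWeight (containing i) T j := by
        rw [← Finset.mul_sum, Finset.sum_comm]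
        simp only [Finset.sum_comm (s := J)]
    _ ≤ C * ∑ i, ∑ _T ∈ containing i, 2 ^ (n + 1) * (n + 1 : ℝ) ^ 3 := by
        gcongr with i _ T hT
        exact peak_le i T hT
    _ = C * 24 * 2 ^ n * (n + 1) ^ 3 := by
        simp only [Finset.sum_const, card_containing, Finset.card_univ, Fintype.card_fin]
        ring

end Pattern

section PatternFactor

theorem prod_minFac_isPrimePow_divisors {n : ℕ} (hn : n ≠ 0) :
    ∏ q ∈ n.divisors with IsPrimePow q, q.minFac = n := by
  have minFac_pos (q : ℕ) : (0 : ℝ) < q.minFac := mod_cast q.minFac_pos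
  have log_eq : log (∏ q ∈ n.divisors with IsPrimePow q, (q.minFac : ℝ)) = log n := by
    rw [Real.log_prod fun q _ ↦ (minFac_pos q).ne', Finset.sum_filter,
      ← ArithmeticFunction.vonMangoldt_sum]
    simp only [ArithmeticFunction.vonMangoldt_apply]
  have := Real.log_injOn_pos (Set.mem_Ioi.2 (Finset.prod_pos fun q _ ↦ minFac_pos q))
    (Set.mem_Ioi.2 (Nat.cast_pos.2 (Nat.pos_of_ne_zero hn))) log_eq
  exact_mod_cast this

theorem dvd_or_dvd_of_minFac_eq {q r : ℕ} (hq : IsPrimePow q) (hr : IsPrimePow r)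
    (h : q.minFac = r.minFac) : q ∣ r ∨ r ∣ q := by
  rw [← hq.minFac_pow_factorization_eq, ← hr.minFac_pow_factorization_eq, h]
  exact (le_total _ _).imp (pow_dvd_pow _) (pow_dvd_pow _)

variable {κ : Type*} [Fintype κ] [DecidableEq κ]

/-- The set of indices `i` for which `q` divides `a i`. -/
def dividedIndices (a : κ → ℕ) (q : ℕ) : Finset κ := Finset.univ.filter (q ∣ a ·)

/-- The part of `L` made up of the prime powers that divide `a i` exactly for `i ∈ S`: each prime
power `p ^ k ∣ L` of this kind contributes one factor `p`. -/
def patternFactor (L : ℕ) (a : κ → ℕ) (S : Finset κ) : ℕ :=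
  ∏ q ∈ L.divisors.filter IsPrimePow with dividedIndices a q = S, q.minFac

theorem patternFactor_pos (L : ℕ) (a : κ → ℕ) (S : Finset κ) : 0 < patternFactor L a S :=
  Finset.prod_pos fun q _ ↦ q.minFac_pos

theorem prod_patternFactor (L : ℕ) (a : κ → ℕ) (F : Finset (Finset κ)) :
    ∏ S ∈ F, patternFactor L a S =
      ∏ q ∈ L.divisors.filter IsPrimePow with dividedIndices a q ∈ F, q.minFac :=
  Finset.prod_fiberwise_eq_prod_filter _ _ _ _

theorem prod_patternFactor_le {L : ℕ} (hL : L ≠ 0) (a : κ → ℕ) (F : Finset (Finset κ)) :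
    ∏ S ∈ F, patternFactor L a S ≤ L := by
  rw [prod_patternFactor]
  conv_rhs => rw [← prod_minFac_isPrimePow_divisors hL]
  exact Finset.prod_le_prod_of_subset_of_one_le' (Finset.filter_subset _ _)
    fun q _ _ ↦ q.minFac_pos

theorem prod_patternFactor_eq {L : ℕ} (hL : L ≠ 0) {a : κ → ℕ} {i : κ} (hi : a i ∣ L) :
    ∏ S ∈ Finset.univ.filter (i ∈ ·), patternFactor L a S = a i := by
  rw [prod_patternFactor]
  conv_rhs => rw [← prod_minFac_isPrimePow_divisors (ne_zero_of_dvd_ne_zero hL hi)]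
  congr 1
  ext q
  simp only [dividedIndices, Finset.mem_filter, Finset.mem_univ, Nat.mem_divisors, true_and, ne_eq,
    hL, ne_zero_of_dvd_ne_zero hL hi, not_false_eq_true, and_true]
  exact ⟨fun h ↦ ⟨h.2, h.1.2⟩, fun h ↦ ⟨⟨h.1.trans hi, h.2⟩, h.1⟩⟩

theorem coprime_patternFactor (L : ℕ) (a : κ → ℕ) {S T : Finset κ} (hST : ¬ S ⊆ T)
    (hTS : ¬ T ⊆ S) : (patternFactor L a S).Coprime (patternFactor L a T) := by
  have subset_of_dvd {q r : ℕ} (h : q ∣ r) : dividedIndices a r ⊆ dividedIndices a q :=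
    Finset.monotone_filter_right _ fun _ _ hr ↦ h.trans hr
  refine Nat.Coprime.prod_left fun q hq ↦ Nat.Coprime.prod_right fun r hr ↦ ?_
  simp only [Finset.mem_filter] at hq hr
  obtain ⟨⟨-, hqpow⟩, rfl⟩ := hq
  obtain ⟨⟨-, hrpow⟩, rfl⟩ := hr
  refine (Nat.coprime_primes (Nat.minFac_prime hqpow.ne_one)
    (Nat.minFac_prime hrpow.ne_one)).2 fun h ↦ ?_
  exact (dvd_or_dvd_of_minFac_eq hqpow hrpow h).elim (hTS ∘ subset_of_dvd) (hST ∘ subset_of_dvd)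

end PatternFactor

namespace Pattern

theorem prod_containing (f : Finset (Fin 3) → ℕ) (i : Fin 3) :
    ∏ S ∈ containing i, f S.1 = ∏ S ∈ Finset.univ.filter (i ∈ ·), f S := by
  have map_eq : (containing i).map (Function.Embedding.subtype _) =
      Finset.univ.filter (i ∈ ·) := by
    ext S
    simp only [Finset.mem_map, mem_containing, Function.Embedding.subtype_apply, Subtype.exists,
      exists_and_left, exists_prop, Finset.mem_filter_univ]
    exact ⟨fun ⟨_, hT, _, h⟩ ↦ h ▸ hT, fun h ↦ ⟨S, h, ⟨i, h⟩, rfl⟩⟩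
  rw [← map_eq, Finset.prod_map]
  rfl

theorem coprimeProducts_patternFactor {L : ℕ} (hL : L ≠ 0) {a : Fin 3 → ℕ} (ha : ∀ i, a i ∣ L)
    {i j : Fin 3} (hij : a i ≠ a j) :
    CoprimeProducts (containing i \ containing j) (containing j \ containing i)
      fun S ↦ patternFactor L a S.1 := by
  refine ⟨Nat.Coprime.prod_left fun S hS ↦ Nat.Coprime.prod_right fun T hT ↦ ?_, fun h ↦ hij ?_⟩
  · simp only [Finset.mem_sdiff, mem_containing] at hS hT
    exact coprime_patternFactor L a (fun h ↦ hT.2 (h hS.1)) fun h ↦ hS.2 (h hT.1)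
  · have prod_eq (k : Fin 3) : ∏ S ∈ containing k, patternFactor L a S.1 = a k := by
      rw [prod_containing, prod_patternFactor_eq hL (ha k)]
    rw [← prod_eq i, ← prod_eq j, ← Finset.prod_inter_mul_prod_sdiff (containing i),
      ← Finset.prod_inter_mul_prod_sdiff (containing j), h, Finset.inter_comm]

theorem exists_card_injective_shiftedPrimes_le :
    ∃ C : ℝ, 0 < C ∧ ∀ (X : ℕ) (A : Finset (Fin 3 → ℕ)),
      (∀ a ∈ A, (∀ i, (a i + 1).Prime) ∧ a.Injective ∧ Finset.univ.lcm a ≤ X) →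
      (A.card : ℝ) ≤ C * 2 ^ Nat.log 2 X * (Nat.log 2 X + 1) ^ 3 := by
  obtain ⟨C, hC, card_le⟩ := exists_card_isAdmissible_le
  refine ⟨C, hC, fun X A hA ↦ ?_⟩
  set factors : (Fin 3 → ℕ) → Pattern → ℕ := fun a S ↦ patternFactor (Finset.univ.lcm a) a S.1
  have lcm_ne_zero {a} (ha : a ∈ A) : Finset.univ.lcm a ≠ 0 := by
    rw [Ne, Finset.lcm_eq_zero_iff]
    rintro ⟨i, -, hi⟩
    exact Nat.not_prime_one (by simpa [hi] using (hA a ha).1 i)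
  have prod_factors {a} (ha : a ∈ A) (i : Fin 3) : ∏ S ∈ containing i, factors a S = a i := by
    rw [prod_containing (patternFactor (Finset.univ.lcm a) a),
      prod_patternFactor_eq (lcm_ne_zero ha) (Finset.dvd_lcm (Finset.mem_univ i))]
  have factors_injOn : Set.InjOn factors A := fun a ha b hb h ↦
    funext fun i ↦ by rw [← prod_factors ha, h, prod_factors hb]
  rw [← Finset.card_image_of_injOn factors_injOn]
  refine card_le X _ fun e he ↦ ?_
  obtain ⟨a, ha, rfl⟩ := Finset.mem_image.1 he
  obtain ⟨hprime, hinj, hlcm⟩ := hA a ha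
  refine ⟨⟨fun i ↦ ?_, fun i j hij ↦ ?_⟩, fun S ↦ patternFactor_pos _ _ _, ?_⟩
  · rw [prod_factors ha]
    exact hprime i
  · exact coprimeProducts_patternFactor (lcm_ne_zero ha)
      (fun k ↦ Finset.dvd_lcm (Finset.mem_univ k)) (hinj.ne hij)
  · refine le_trans ?_ hlcm
    have := prod_patternFactor_le (lcm_ne_zero ha) a
      (Finset.univ.map (Function.Embedding.subtype Finset.Nonempty))
    rwa [Finset.prod_map] at this

end Pattern

theorem card_pairs_lcm_le {X : ℕ} {S : Finset (ℕ × ℕ)}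
    (hS : ∀ t ∈ S, t.1 ≠ 0 ∧ t.2 ≠ 0 ∧ t.1.lcm t.2 ≤ X) :
    (S.card : ℝ) ≤ X * (1 + log X) ^ 2 := by
  set G := (Finset.Icc 1 X ×ˢ Finset.Icc 1 X).sigma fun t ↦ Finset.Icc 1 (X / (t.1 * t.2))
  have subset_image : S ⊆ G.image fun u ↦ (u.1.1 * u.2, u.1.2 * u.2) := by
    rintro ⟨a, b⟩ hab
    obtain ⟨ha, hb, hlcm⟩ := hS _ hab
    obtain ⟨c, d, hcd, hac, hbd⟩ := Nat.exists_coprime a b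
    set g := a.gcd b
    simp only [hac, hbd, Nat.lcm_mul_right, hcd.lcm_eq_mul, ne_eq, mul_eq_zero, not_or]
      at ha hb hlcm
    obtain ⟨hc, hg⟩ := ha
    rw [Finset.mem_image]
    refine ⟨⟨(c, d), g⟩, ?_, by rw [hac, hbd]⟩
    have hmul : 0 < c * d := Nat.mul_pos (Nat.pos_of_ne_zero hc) (Nat.pos_of_ne_zero hb.1)
    have hle : c * d ≤ X := (Nat.le_mul_of_pos_right _ (Nat.pos_of_ne_zero hg)).trans hlcm
    simp only [G, Finset.mem_sigma, Finset.mem_product, Finset.mem_Icc, Nat.le_div_iff_mul_le hmul]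
    exact ⟨⟨⟨Nat.pos_of_ne_zero hc, (Nat.le_of_dvd hmul (dvd_mul_right c d)).trans hle⟩,
      Nat.pos_of_ne_zero hb.1, (Nat.le_of_dvd hmul (dvd_mul_left d c)).trans hle⟩,
      Nat.pos_of_ne_zero hg, by rwa [mul_comm]⟩
  have harmonic_le : ∑ i ∈ Finset.Icc 1 X, (i : ℝ)⁻¹ ≤ 1 + log X := by
    have := harmonic_le_one_add_log X
    rw [harmonic_eq_sum_Icc] at this
    push_cast at this
    exact this
  calc (S.card : ℝ) ≤ G.card :=
        mod_cast (Finset.card_le_card subset_image).trans Finset.card_image_le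
    _ = ∑ t ∈ Finset.Icc 1 X ×ˢ Finset.Icc 1 X, ((X / (t.1 * t.2) : ℕ) : ℝ) := by
        simp only [G, Finset.card_sigma, Nat.card_Icc, Nat.add_sub_cancel, Nat.cast_sum]
    _ ≤ ∑ t ∈ Finset.Icc 1 X ×ˢ Finset.Icc 1 X, X * ((t.1 : ℝ)⁻¹ * (t.2 : ℝ)⁻¹) := by
        gcongr with t
        exact Nat.cast_div_le.trans_eq (by push_cast; rw [div_eq_mul_inv, mul_inv])
    _ = X * (∑ i ∈ Finset.Icc 1 X, (i : ℝ)⁻¹) ^ 2 := by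
        rw [← Finset.mul_sum, sq, Finset.sum_mul_sum, Finset.sum_product]
    _ ≤ X * (1 + log X) ^ 2 := by
        gcongr

theorem card_noninjective_lcm_le {X : ℕ} {A : Finset (Fin 3 → ℕ)}
    (hA : ∀ a ∈ A, ¬ a.Injective ∧ (∀ i, a i ≠ 0) ∧ Finset.univ.lcm a ≤ X) :
    (A.card : ℝ) ≤ 6 * (X * (1 + log X) ^ 2) := by
  set P := (Finset.univ : Finset (Fin 3)).offDiag
  have subset_biUnion : A ⊆ P.biUnion fun u ↦ A.filter fun a ↦ a u.1 = a u.2 := by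
    intro a ha
    obtain ⟨i, j, hij, hne⟩ := Function.not_injective_iff.1 (hA a ha).1
    exact Finset.mem_biUnion.2 ⟨(i, j), Finset.mem_offDiag.2 ⟨Finset.mem_univ i,
      Finset.mem_univ j, hne⟩, Finset.mem_filter.2 ⟨ha, hij⟩⟩
  have card_filter_le (u) (hu : u ∈ P) :
      ((A.filter fun a ↦ a u.1 = a u.2).card : ℝ) ≤ X * (1 + log X) ^ 2 := by
    obtain ⟨k, hk⟩ : ∃ k, ∀ l, l = u.1 ∨ l = u.2 ∨ l = k := by
      revert u
      decide
    have pair_injOn : Set.InjOn (fun a : Fin 3 → ℕ ↦ (a u.1, a k))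
        (A.filter fun a ↦ a u.1 = a u.2) := by
      intro a ha b hb hab
      have ha := (Finset.mem_filter.1 ha).2
      have hb := (Finset.mem_filter.1 hb).2
      obtain ⟨hu1, huk⟩ := Prod.mk.inj hab
      funext l
      rcases hk l with rfl | rfl | rfl
      exacts [hu1, ha ▸ hb ▸ hu1, huk]
    rw [← Finset.card_image_of_injOn pair_injOn]
    refine card_pairs_lcm_le fun t ht ↦ ?_
    obtain ⟨a, ha, rfl⟩ := Finset.mem_image.1 ht
    obtain ⟨-, hne, hlcm⟩ := hA a (Finset.mem_filter.1 ha).1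
    have lcm_ne_zero : Finset.univ.lcm a ≠ 0 := Finset.lcm_ne_zero_iff.2 fun i _ ↦ hne i
    exact ⟨hne _, hne _, (Nat.le_of_dvd (Nat.pos_of_ne_zero lcm_ne_zero) (Nat.lcm_dvd
      (Finset.dvd_lcm (Finset.mem_univ _)) (Finset.dvd_lcm (Finset.mem_univ _)))).trans hlcm⟩
  calc (A.card : ℝ) ≤ ∑ u ∈ P, ((A.filter fun a ↦ a u.1 = a u.2).card : ℝ) :=
        mod_cast (Finset.card_le_card subset_biUnion).trans Finset.card_biUnion_le
    _ ≤ ∑ _u ∈ P, X * (1 + log X) ^ 2 := Finset.sum_le_sum card_filter_le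
    _ = 6 * (X * (1 + log X) ^ 2) := by
        rw [Finset.sum_const, nsmul_eq_mul]
        norm_num [P, Finset.offDiag_card]

theorem exists_card_shiftedPrimes_le :
    ∃ C : ℝ, 0 < C ∧ ∀ (X : ℕ) (A : Finset (Fin 3 → ℕ)),
      (∀ a ∈ A, (∀ i, (a i + 1).Prime) ∧ Finset.univ.lcm a ≤ X) →
      (A.card : ℝ) ≤ C * 2 ^ Nat.log 2 X * (Nat.log 2 X + 1) ^ 3 + 6 * (X * (1 + log X) ^ 2) := by
  obtain ⟨C, hC, card_le⟩ := Pattern.exists_card_injective_shiftedPrimes_le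
  refine ⟨C, hC, fun X A hA ↦ ?_⟩
  have ne_zero {a} (ha : a ∈ A) (i : Fin 3) : a i ≠ 0 := fun hi ↦
    Nat.not_prime_one (by simpa only [hi, zero_add] using (hA a ha).1 i)
  classical
  rw [← Finset.card_filter_add_card_filter_not Function.Injective, Nat.cast_add]
  refine add_le_add (card_le X _ fun a ha ↦ ?_) (card_noninjective_lcm_le fun a ha ↦ ?_)
  · obtain ⟨haA, hinj⟩ := Finset.mem_filter.1 ha
    exact ⟨(hA a haA).1, hinj, (hA a haA).2⟩
  · obtain ⟨haA, hninj⟩ := Finset.mem_filter.1 ha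
    exact ⟨hninj, ne_zero haA, (hA a haA).2⟩

theorem one_le_logb_two {x : ℝ} (hx : 2 ≤ x) : 1 ≤ logb 2 x := by
  rwa [Real.le_logb_iff_rpow_le one_lt_two (by linarith), Real.rpow_one]

theorem natLog_two_floor_le_logb {x : ℝ} (hx : 1 ≤ x) : (Nat.log 2 ⌊x⌋₊ : ℝ) ≤ logb 2 x := calc
  (Nat.log 2 ⌊x⌋₊ : ℝ) ≤ logb 2 ⌊x⌋₊ := mod_cast Real.natLog_le_logb ⌊x⌋₊ 2
  _ ≤ logb 2 x := Real.logb_le_logb_of_le one_lt_two (Nat.cast_pos.2 (Nat.floor_pos.2 hx))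
    (Nat.floor_le (by linarith))

theorem log_floor_le_logb_two {x : ℝ} (hx : 1 ≤ x) : log ⌊x⌋₊ ≤ logb 2 x := calc
  log ⌊x⌋₊ ≤ log x := Real.log_le_log (Nat.cast_pos.2 (Nat.floor_pos.2 hx))
    (Nat.floor_le (by linarith))
  _ ≤ logb 2 x := le_div_self (Real.log_nonneg hx) (Real.log_pos one_lt_two)
    (by linarith [Real.log_two_lt_d9])

theorem exists_card_shiftedPrimes_le_mul_log_pow :
    ∃ C : ℝ, 0 < C ∧ ∀ x : ℝ, 2 ≤ x → ∀ A : Finset (Fin 3 → ℕ),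
      (∀ a ∈ A, (∀ i, (a i + 1).Prime) ∧ Finset.univ.lcm a ≤ ⌊x⌋₊) →
      (A.card : ℝ) ≤ C * x * log x ^ 3 := by
  obtain ⟨C, hC, card_le⟩ := exists_card_shiftedPrimes_le
  have : 0 < log 2 := Real.log_pos one_lt_two
  refine ⟨(C + 6) * (2 / log 2) ^ 3, by positivity, fun x hx A hA ↦ (card_le _ A hA).trans ?_⟩
  have one_le_logb := one_le_logb_two hx
  have natLog_le := natLog_two_floor_le_logb (one_le_two.trans hx)
  have log_le := log_floor_le_logb_two (one_le_two.trans hx)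
  have floor_pos : 0 < ⌊x⌋₊ := Nat.floor_pos.2 (one_le_two.trans hx)
  have : 0 ≤ log ⌊x⌋₊ := Real.log_natCast_nonneg _
  have floor_le : (⌊x⌋₊ : ℝ) ≤ x := Nat.floor_le (by linarith)
  have two_pow_le : (2 : ℝ) ^ Nat.log 2 ⌊x⌋₊ ≤ x := calc
    (2 : ℝ) ^ Nat.log 2 ⌊x⌋₊ ≤ ⌊x⌋₊ := mod_cast Nat.pow_log_le_self 2 floor_pos.ne'
    _ ≤ x := floor_le
  calc C * 2 ^ Nat.log 2 ⌊x⌋₊ * (Nat.log 2 ⌊x⌋₊ + 1) ^ 3 + 6 * (⌊x⌋₊ * (1 + log ⌊x⌋₊) ^ 2)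
      ≤ C * x * (2 * logb 2 x) ^ 3 + 6 * (x * (2 * logb 2 x) ^ 2) := by
        gcongr <;> linarith
    _ ≤ C * x * (2 * logb 2 x) ^ 3 + 6 * (x * (2 * logb 2 x) ^ 3) := by
        gcongr <;> linarith
    _ = (C + 6) * (2 / log 2) ^ 3 * x * log x ^ 3 := by
        rw [Real.logb]
        ring

theorem lcm_univ_fin_three (a : Fin 3 → ℕ) :
    Finset.univ.lcm a = ((a 0).lcm (a 1)).lcm (a 2) := by
  refine Nat.dvd_antisymm (Finset.lcm_dvd fun i _ ↦ ?_) (Nat.lcm_dvd (Nat.lcm_dvd ?_ ?_) ?_)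
  · fin_cases i
    exacts [(Nat.dvd_lcm_left _ _).trans (Nat.dvd_lcm_left _ _),
      (Nat.dvd_lcm_right _ _).trans (Nat.dvd_lcm_left _ _), Nat.dvd_lcm_right _ _]
  all_goals exact Finset.dvd_lcm (Finset.mem_univ _)

theorem S3_upper_bound :
    ∃ C : ℝ, C > 0 ∧ ∀ x : ℝ, x ≥ 2 →
      ((((Finset.Icc 1 (⌊x⌋₊ + 1) ×ˢ Finset.Icc 1 (⌊x⌋₊ + 1)) ×ˢ
            Finset.Icc 1 (⌊x⌋₊ + 1)).filter
          (fun t : (ℕ × ℕ) × ℕ => t.1.1.Prime ∧ t.1.2.Prime ∧ t.2.Prime ∧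
            (Nat.lcm (Nat.lcm (t.1.1 - 1) (t.1.2 - 1)) (t.2 - 1) : ℝ) ≤ x)).card : ℝ)
        ≤ C * x * (Real.log x) ^ 3 := by
  obtain ⟨C, hC, card_le⟩ := exists_card_shiftedPrimes_le_mul_log_pow
  refine ⟨C, hC, fun x hx ↦ ?_⟩
  set shift : (ℕ × ℕ) × ℕ → Fin 3 → ℕ := fun t ↦ ![t.1.1 - 1, t.1.2 - 1, t.2 - 1]
  rw [← Finset.card_image_of_injOn (f := shift)]
  · refine card_le x hx _ fun a ha ↦ ?_
    obtain ⟨⟨⟨p, q⟩, r⟩, ht, rfl⟩ := Finset.mem_image.1 ha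
    obtain ⟨-, hp, hq, hr, hlcm⟩ := Finset.mem_filter.1 ht
    refine ⟨fun i ↦ ?_, (lcm_univ_fin_three _).trans_le (Nat.le_floor hlcm)⟩
    fin_cases i
    exacts [(Nat.sub_add_cancel hp.one_le).symm ▸ hp, (Nat.sub_add_cancel hq.one_le).symm ▸ hq,
      (Nat.sub_add_cancel hr.one_le).symm ▸ hr]
  · rintro ⟨⟨p, q⟩, r⟩ ht ⟨⟨p', q'⟩, r'⟩ ht' h
    obtain ⟨-, hp, hq, hr, -⟩ := Finset.mem_filter.1 ht
    obtain ⟨-, hp', hq', hr', -⟩ := Finset.mem_filter.1 ht'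
    exact Prod.ext (Prod.ext (Nat.sub_one_cancel hp.pos hp'.pos (congrFun h 0))
      (Nat.sub_one_cancel hq.pos hq'.pos (congrFun h 1)))
      (Nat.sub_one_cancel hr.pos hr'.pos (congrFun h 2))
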